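/- arXiv:1409.3922 — 2 statements merged into one kernel-verified Lean document; each statement's English description precedes it below -/
import Mathlib

section
/- Let (X,μ) be a good Cantor measure space and I an invariant ideal on X whose members are each contained in a member of I having the Baire property. If I contains a non-meager set, then I contains every μ-null subset of X. -/
/-!
The ideal contains some `B` that is comeager in a nonempty clopen set `V`, so every point has a
clopen neighbourhood `P` with `μ P < μ V`, and by compactness it suffices to show `N ∩ P ∈ I`. The
Subset Condition gives a clopen `W ⊆ V` with `μ W = μ P`; two measure-preserving homeomorphisms
`h₀`, `h₁` with `hᵢ ⁻¹' W = P` are constructed so that every `x ∈ N` has `h₀ x` or `h₁ x` in the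
comeager set `(V \ B)ᶜ`. Then `N ∩ P ⊆ h₀⁻¹(B) ∪ h₁⁻¹(B)`.

Homeomorphisms are limits of finite partial isomorphisms (`PState`): pairs of finite clopen
partitions whose corresponding cells have equal measure. The Subset Condition allows any such state
to be refined so as to decide a prescribed clopen set on both sides
(`PState.exists_determine_both`), or so as to send a clopen set of sufficiently small measure into a
prescribed dense open set (`PState.exists_send_into`).

Two homeomorphisms are used for the following reason. The null set `N` lies in the limsup of
clopen sets `C k` with summable measures. A state can send a block `⋃ m ≤ k < c, C k` into a dense
open set as soon as `m` is large compared with the state, but treating the block refines the state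
and thereby forces the next block of the same construction to start later than `c`. A second
construction takes care of the gaps: the blocks `[c n, c (n + 1))` with `n` even are treated by one
and those with `n` odd by the other (`PState.exists_two_homeos`).
-/

open MeasureTheory Set

/-! ### Comeager sets -/

lemma exists_antitone_dense {X : Type*} [TopologicalSpace X] [BaireSpace X]
    {G : Set X} (hG : G ∈ residual X) :
    ∃ D : ℕ → Set X, (∀ n, IsOpen (D n)) ∧ (∀ n, Dense (D n)) ∧ Antitone D ∧ ⋂ n, D n ⊆ G := by
  obtain ⟨t, htG, ht, htd⟩ := mem_residual.1 hG
  obtain ⟨f, hf, rfl⟩ := ht.eq_iInter_nat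
  refine ⟨fun n => ⋂ k ∈ Finset.range (n + 1), f k, fun n => isOpen_biInter_finset fun k _ => hf k,
    fun n => htd.mono fun x hx => ?_, fun m n hmn x hx => ?_, fun x hx => htG ?_⟩
  · simp only [mem_iInter] at hx ⊢
    exact fun k _ => hx k
  · simp only [mem_iInter, Finset.mem_range] at hx ⊢
    exact fun k hk => hx k (by omega)
  · simp only [mem_iInter, Finset.mem_range] at hx ⊢
    exact fun k => hx k k (by omega)

/-! ### Finite partial isomorphisms -/

/-- A finite measure-preserving partial isomorphism of `X`, used as one stage of a back-and-forth
construction: two partitions of `X` into clopen cells `a ⁻¹' {i}` and `b ⁻¹' {i}`, with cells of the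
same index having the same measure. Cells may be empty; by compactness only finitely many are not.
A homeomorphism `h` extends the state when `b (h x) = a x` for all `x`. -/
structure PState {X : Type*} [TopologicalSpace X] [MeasurableSpace X] (μ : Measure X) where
  a : X → ℕ
  b : X → ℕ
  ca : Continuous a
  cb : Continuous b
  heq : ∀ i, μ (a ⁻¹' {i}) = μ (b ⁻¹' {i})

namespace PState

variable {X : Type*} [TopologicalSpace X] [MeasurableSpace X] {μ : Measure X}

/-- The inverse partial isomorphism. -/
def symm (s : PState μ) : PState μ := ⟨s.b, s.a, s.cb, s.ca, fun i => (s.heq i).symm⟩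

/-- `t` refines `s`: both partitions of `t` are finer than those of `s`, with the same
correspondence `φ` from the cells of `t` to the cells of `s`. -/
def Refines (s t : PState μ) : Prop :=
  ∃ φ : ℕ → ℕ, (∀ x, s.a x = φ (t.a x)) ∧ ∀ x, s.b x = φ (t.b x)

lemma Refines.trans {s t u : PState μ} (h : Refines s t) (h' : Refines t u) : Refines s u := by
  obtain ⟨φ, h1, h2⟩ := h
  obtain ⟨ψ, h3, h4⟩ := h'
  exact ⟨φ ∘ ψ, fun x => by simp [h1, h3], fun x => by simp [h2, h4]⟩

lemma Refines.symm {s t : PState μ} (h : Refines s t) : Refines s.symm t.symm := by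
  obtain ⟨φ, h1, h2⟩ := h
  exact ⟨φ, h2, h1⟩

lemma Refines.eq {s t : PState μ} (h : Refines s t) {x y : X} (hxy : t.a x = t.b y) :
    s.a x = s.b y := by
  obtain ⟨φ, h1, h2⟩ := h
  rw [h1, h2, hxy]

lemma exists_b_eq (hpos : ∀ U : Set X, IsOpen U → U.Nonempty → 0 < μ U) (s : PState μ) (x : X) :
    ∃ y, s.b y = s.a x := by
  have h : 0 < μ (s.a ⁻¹' {s.a x}) :=
    hpos _ ((isOpen_discrete _).preimage s.ca) ⟨x, rfl⟩
  rw [s.heq] at h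
  exact nonempty_of_measure_ne_zero h.ne'

variable [BorelSpace X]

lemma measure_eq (s : PState μ) (S : Set ℕ) : μ (s.a ⁻¹' S) = μ (s.b ⁻¹' S) := by
  have : μ.map s.a = μ.map s.b := by
    apply Measure.ext_of_singleton
    intro i
    rw [Measure.map_apply s.ca.measurable (measurableSet_singleton i),
      Measure.map_apply s.cb.measurable (measurableSet_singleton i), s.heq]
  rw [← Measure.map_apply s.ca.measurable (MeasurableSet.of_discrete),
    ← Measure.map_apply s.cb.measurable (MeasurableSet.of_discrete), this]

/-- A state is refined by cutting its cells along `C` on the left and `D` on the right, provided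
corresponding pieces have equal measure. The pieces of cell `j` inside `C`, `D` get the label
`2 * j + 1`, those outside the label `2 * j`. -/
lemma exists_extend [IsFiniteMeasure μ] (s : PState μ) {C D : Set X} (hC : IsClopen C)
    (hD : IsClopen D) (h : ∀ i, μ (s.a ⁻¹' {i} ∩ C) = μ (s.b ⁻¹' {i} ∩ D)) :
    ∃ t, Refines s t ∧ C = t.a ⁻¹' {i | Odd i} ∧ D = t.b ⁻¹' {i | Odd i} := by
  classical
  have cont : ∀ (f : X → ℕ) (E : Set X), Continuous f → IsClopen E →
      Continuous (fun x => 2 * f x + (boolIndicator E x).toNat) := by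
    intro f E hf hE
    exact (continuous_of_discreteTopology (f := fun p : ℕ × Bool => 2 * p.1 + p.2.toNat)).comp
      (hf.prodMk ((continuous_boolIndicator_iff_isClopen E).2 hE))
  have h1 : ∀ (f : X → ℕ) (E : Set X) (j : ℕ),
      (fun x => 2 * f x + (boolIndicator E x).toNat) ⁻¹' {2 * j + 1} = f ⁻¹' {j} ∩ E := by
    intro f E j
    ext x
    by_cases hx : x ∈ E <;> simp [boolIndicator, hx]
    omega
  have h0 : ∀ (f : X → ℕ) (E : Set X) (j : ℕ),
      (fun x => 2 * f x + (boolIndicator E x).toNat) ⁻¹' {2 * j} = f ⁻¹' {j} \ E := by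
    intro f E j
    ext x
    by_cases hx : x ∈ E <;> simp [boolIndicator, hx]
    omega
  have hodd : ∀ (f : X → ℕ) (E : Set X),
      E = (fun x => 2 * f x + (boolIndicator E x).toNat) ⁻¹' {i | Odd i} := by
    intro f E
    ext x
    by_cases hx : x ∈ E <;> simp [boolIndicator, hx]
  have hdiv : ∀ (f : X → ℕ) (E : Set X) (x : X),
      f x = (2 * f x + (boolIndicator E x).toNat) / 2 := by
    intro f E x
    by_cases hx : x ∈ E <;> simp [boolIndicator, hx]
    omega
  refine ⟨⟨fun x => 2 * s.a x + (boolIndicator C x).toNat,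
    fun x => 2 * s.b x + (boolIndicator D x).toNat, cont _ _ s.ca hC, cont _ _ s.cb hD, ?_⟩,
    ⟨fun n => n / 2, hdiv _ _, hdiv _ _⟩, hodd _ _, hodd _ _⟩
  intro i
  obtain ⟨j, rfl | rfl⟩ := Nat.even_or_odd' i
  · rw [h0, h0]
    have e1 := measure_inter_add_sdiff (μ := μ) (s.a ⁻¹' {j}) hC.2.measurableSet
    have e2 := measure_inter_add_sdiff (μ := μ) (s.b ⁻¹' {j}) hD.2.measurableSet
    rw [s.heq, ← e2, h] at e1
    exact (ENNReal.add_right_inj (measure_ne_top μ _)).1 e1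
  · rw [h1, h1, h]

/-- The right-hand cut may be chosen separately in each cell: the union of the `W i` is clopen. -/
lemma exists_extend_of_fibres [IsFiniteMeasure μ] (s : PState μ) {C : Set X} (hC : IsClopen C)
    (W : ℕ → Set X) (hW : ∀ i, IsClopen (W i)) (hWb : ∀ i, W i ⊆ s.b ⁻¹' {i})
    (hWm : ∀ i, μ (W i) = μ (s.a ⁻¹' {i} ∩ C)) :
    ∃ t, Refines s t ∧ C = t.a ⁻¹' {i | Odd i} ∧ ∀ x y, x ∈ C → t.a x = t.b y → y ∈ W (s.b y) := by
  have hD : IsClopen {y | y ∈ W (s.b y)} := by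
    constructor
    · rw [← isOpen_compl_iff]
      have : {y | y ∈ W (s.b y)}ᶜ = ⋃ i, s.b ⁻¹' {i} ∩ (W i)ᶜ := by ext; simp
      rw [this]
      exact isOpen_iUnion fun i =>
        ((isOpen_discrete _).preimage s.cb).inter (hW i).1.isOpen_compl
    · have : {y | y ∈ W (s.b y)} = ⋃ i, s.b ⁻¹' {i} ∩ (W i) := by ext; simp
      rw [this]
      exact isOpen_iUnion fun i => ((isOpen_discrete _).preimage s.cb).inter (hW i).2
  obtain ⟨t, ht, htC, htD⟩ := s.exists_extend hC hD (by
    intro i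
    rw [← hWm]
    congr 1
    ext y
    constructor
    · intro hy
      have := hWb i hy
      simp only [mem_preimage, mem_singleton_iff] at this
      exact ⟨this, by simpa [this] using hy⟩
    · rintro ⟨h1, h2⟩
      simp only [mem_preimage, mem_singleton_iff] at h1
      simpa [h1] using h2)
  refine ⟨t, ht, htC, fun x y hx hxy => ?_⟩
  have : y ∈ {y | y ∈ W (s.b y)} := by
    rw [htC] at hx
    rw [htD, mem_preimage, ← hxy]
    exact hx
  exact this

/-- The forward step: any clopen set `C` becomes a union of left-hand cells. -/
lemma exists_determine [IsFiniteMeasure μ]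
    (hsc : ∀ U V : Set X, IsClopen U → IsClopen V → μ U < μ V →
      ∃ W, W ⊆ V ∧ IsClopen W ∧ μ W = μ U)
    (s : PState μ) {C : Set X} (hC : IsClopen C) :
    ∃ t, Refines s t ∧ ∃ S, C = t.a ⁻¹' S := by
  have clo : ∀ {f : X → ℕ}, Continuous f → ∀ i, IsClopen (f ⁻¹' {i}) :=
    fun hf i => (isClopen_discrete _).preimage hf
  have : ∀ i, ∃ W, W ⊆ s.b ⁻¹' {i} ∧ IsClopen W ∧ μ W = μ (s.a ⁻¹' {i} ∩ C) := by
    intro i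
    rcases (measure_mono (μ := μ) (inter_subset_left : s.a ⁻¹' {i} ∩ C ⊆ _)).lt_or_eq with h | h
    · exact hsc _ _ ((clo s.ca i).inter hC) (clo s.cb i) (by rwa [← s.heq])
    · exact ⟨_, subset_rfl, clo s.cb i, by rw [h, s.heq]⟩
  choose W h1 h2 h3 using this
  obtain ⟨t, ht, hC, -⟩ := s.exists_extend_of_fibres hC W h2 h1 h3
  exact ⟨t, ht, _, hC⟩

/-- The forward step followed by the backward one: `C` becomes a union of cells on both sides. -/
lemma exists_determine_both [IsFiniteMeasure μ]
    (hsc : ∀ U V : Set X, IsClopen U → IsClopen V → μ U < μ V →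
      ∃ W, W ⊆ V ∧ IsClopen W ∧ μ W = μ U)
    (s : PState μ) {C : Set X} (hC : IsClopen C) :
    ∃ t, Refines s t ∧ ∃ S T, C = t.a ⁻¹' S ∧ C = t.b ⁻¹' T := by
  obtain ⟨t, hst, S, hS⟩ := s.exists_determine hsc hC
  obtain ⟨u, htu, T, hT⟩ := t.symm.exists_determine hsc hC
  have h : Refines t u.symm := htu.symm
  refine ⟨u.symm, hst.trans h, ?_⟩
  obtain ⟨φ, h1, -⟩ := h
  refine ⟨φ ⁻¹' S, T, ?_, hT⟩
  rw [hS]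
  ext x
  simp [h1]

/-- Clopen sets `E` of small measure can be sent into a dense open set `D`: each of the finitely many
right-hand cells contains a clopen set of positive measure inside `D`, and `δ` is the least of these
measures. -/
lemma exists_send_into [IsFiniteMeasure μ] [CompactSpace X] [T2Space X] [TotallyDisconnectedSpace X]
    (hpos : ∀ U : Set X, IsOpen U → U.Nonempty → 0 < μ U)
    (hsc : ∀ U V : Set X, IsClopen U → IsClopen V → μ U < μ V →
      ∃ W, W ⊆ V ∧ IsClopen W ∧ μ W = μ U)
    (s : PState μ) {D : Set X} (hD : IsOpen D) (hDd : Dense D) :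
    ∃ δ : ENNReal, 0 < δ ∧ ∀ E, IsClopen E → μ E < δ →
      ∃ t, Refines s t ∧ ∀ x y, x ∈ E → t.a x = t.b y → y ∈ D := by
  have hfin : (range s.b).Finite := (isCompact_range s.cb).finite_of_discrete
  have hV : ∀ i, ∃ V : Set X, IsClopen V ∧ V ⊆ s.b ⁻¹' {i} ∩ D ∧ (i ∈ range s.b → 0 < μ V) := by
    intro i
    by_cases hi : i ∈ range s.b
    · obtain ⟨y, rfl⟩ := hi
      have ho : IsOpen (s.b ⁻¹' {s.b y}) := (isOpen_discrete _).preimage s.cb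
      obtain ⟨z, hz⟩ := hDd.inter_open_nonempty _ ho ⟨y, rfl⟩
      obtain ⟨V, hV, hzV, hVs⟩ := compact_exists_isClopen_in_isOpen (ho.inter hD) hz
      exact ⟨V, hV, hVs, fun _ => hpos _ hV.2 ⟨z, hzV⟩⟩
    · exact ⟨∅, isClopen_empty, empty_subset _, fun h => absurd h hi⟩
  choose V hVc hVs hVpos using hV
  refine ⟨hfin.toFinset.inf fun i => μ (V i), ?_, ?_⟩
  · rw [Finset.lt_inf_iff (by simp)]
    intro i hi
    exact hVpos i (hfin.mem_toFinset.1 hi)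
  · intro E hE hEδ
    have : ∀ i, ∃ W, W ⊆ V i ∧ IsClopen W ∧ μ W = μ (s.a ⁻¹' {i} ∩ E) := by
      intro i
      have hcl : IsClopen (s.a ⁻¹' {i} ∩ E) := ((isClopen_discrete _).preimage s.ca).inter hE
      by_cases hi : i ∈ range s.b
      · refine hsc _ _ hcl (hVc i) ?_
        calc μ (s.a ⁻¹' {i} ∩ E) ≤ μ E := measure_mono inter_subset_right
          _ < _ := hEδ
          _ ≤ μ (V i) := Finset.inf_le (hfin.mem_toFinset.2 hi)
      · refine ⟨∅, empty_subset _, isClopen_empty, ?_⟩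
        have : s.a ⁻¹' {i} ∩ E = ∅ := by
          by_contra hne
          obtain ⟨x, hx, -⟩ := nonempty_iff_ne_empty.2 hne
          obtain ⟨y, hy⟩ := s.exists_b_eq hpos x
          exact hi ⟨y, hy.trans hx⟩
        rw [this]
    choose W h1 h2 h3 using this
    obtain ⟨t, ht, -, h⟩ := s.exists_extend_of_fibres hE W h2
      (fun i => ((h1 i).trans (hVs i)).trans inter_subset_left) h3
    exact ⟨t, ht, fun x y hx hxy => (hVs _ (h1 _ (h x y hx hxy))).2⟩

/-! ### Limits of refining sequences -/

/-- A refining sequence of states in which every clopen set is eventually a union of cells on both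
sides determines a measure-preserving homeomorphism extending all of them. -/
lemma exists_homeo [IsFiniteMeasure μ] [CompactSpace X] [T2Space X] [TotallyDisconnectedSpace X]
    [SecondCountableTopology X]
    (hpos : ∀ U : Set X, IsOpen U → U.Nonempty → 0 < μ U)
    (s : ℕ → PState μ) (hs : ∀ n, Refines (s n) (s (n + 1)))
    (hcl : ∀ C : Set X, IsClopen C →
      ∃ n S T, C = (s n).a ⁻¹' S ∧ C = (s n).b ⁻¹' T) :
    ∃ h : X ≃ₜ X, (∀ S : Set X, MeasurableSet S → μ (h '' S) = μ S) ∧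
      ∀ n x, (s n).b (h x) = (s n).a x := by
  -- the cells matched with those containing `x` form a decreasing sequence of compact sets
  have key : ∀ s : ℕ → PState μ, (∀ n, Refines (s n) (s (n + 1))) →
      ∀ x, ∃ y, ∀ n, (s n).b y = (s n).a x := by
    intro s hs x
    have hclosed : ∀ n, IsClosed {y | (s n).b y = (s n).a x} := fun n =>
      isClosed_eq (s n).cb continuous_const
    have := IsCompact.nonempty_iInter_of_sequence_nonempty_isCompact_isClosed
      (fun n => {y | (s n).b y = (s n).a x})
      (fun n y hy => ((hs n).eq (Eq.symm hy)).symm) (fun n => (s n).exists_b_eq hpos x)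
      (hclosed 0).isCompact hclosed
    obtain ⟨y, hy⟩ := this
    exact ⟨y, fun n => mem_iInter.1 hy n⟩
  have sep : ∀ f : ℕ → X → ℕ, (∀ C : Set X, IsClopen C → ∃ n S, C = f n ⁻¹' S) →
      ∀ x y, (∀ n, f n x = f n y) → x = y := by
    intro f hf x y hxy
    by_contra hne
    obtain ⟨C, hC, hx, hCs⟩ := compact_exists_isClopen_in_isOpen
      (isOpen_compl_singleton (x := y)) (x := x) hne
    obtain ⟨n, S, rfl⟩ := hf C hC
    have : y ∈ f n ⁻¹' S := by
      rw [mem_preimage, ← hxy]; exact hx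
    exact hCs this rfl
  have sepa := sep (fun n => (s n).a) (fun C hC => by
    obtain ⟨n, S, T, h, -⟩ := hcl C hC; exact ⟨n, S, h⟩)
  have sepb := sep (fun n => (s n).b) (fun C hC => by
    obtain ⟨n, S, T, -, h⟩ := hcl C hC; exact ⟨n, T, h⟩)
  choose f hf using key s hs
  choose g hg using key (fun n => (s n).symm) (fun n => (hs n).symm)
  replace hg : ∀ y n, (s n).a (g y) = (s n).b y := hg
  have hfc : Continuous f := by
    rw [isTopologicalBasis_isClopen.continuous_iff]
    intro C hC
    obtain ⟨n, S, T, -, rfl⟩ := hcl C hC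
    have : f ⁻¹' ((s n).b ⁻¹' T) = (s n).a ⁻¹' T := by ext x; simp [hf]
    rw [this]
    exact (isOpen_discrete _).preimage (s n).ca
  let e : X ≃ X := ⟨f, g, fun x => sepa _ _ fun n => by rw [hg, hf],
    fun y => sepb _ _ fun n => by rw [hf, hg]⟩
  let h : X ≃ₜ X := Continuous.homeoOfEquivCompactToT2 (f := e) hfc
  have hg' : ∀ n y, (s n).a (h.symm y) = (s n).b y := fun n y => hg y n
  refine ⟨h, ?_, fun n x => hf x n⟩
  have hmap : μ.map h.symm = μ := by
    have : IsFiniteMeasure (μ.map h.symm) := inferInstance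
    refine ext_of_generate_finite {C : Set X | IsClopen C} ?_ ?_ ?_ ?_
    · rw [BorelSpace.measurable_eq (α := X)]
      exact isTopologicalBasis_isClopen.borel_eq_generateFrom
    · intro A hA B hB _
      exact IsClopen.inter hA hB
    · intro C hC
      rw [Measure.map_apply h.symm.continuous.measurable hC.2.measurableSet]
      obtain ⟨n, S, T, rfl, -⟩ := hcl C hC
      have : h.symm ⁻¹' ((s n).a ⁻¹' S) = (s n).b ⁻¹' S := by ext x; simp [hg']
      rw [this, (s n).measure_eq]
    · rw [Measure.map_apply h.symm.continuous.measurable MeasurableSet.univ, preimage_univ]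
  intro S hS
  conv_rhs => rw [← hmap, Measure.map_apply h.symm.continuous.measurable hS]
  rw [h.image_eq_preimage_symm]

/-! ### Sending a null set into a comeager set -/

/-- A null set lies in the limsup of summable clopen sets. -/
lemma exists_limsup_cover [IsFiniteMeasure μ] [μ.OuterRegular] [CompactSpace X] [T2Space X]
    [TotallyDisconnectedSpace X] [SecondCountableTopology X] {N : Set X} (hN : μ N = 0) :
    ∃ C : ℕ → Set X, (∀ k, IsClopen (C k)) ∧ ∑' k, μ (C k) ≠ ⊤ ∧
      ∀ x ∈ N, ∀ m, ∃ k ≥ m, x ∈ C k := by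
  classical
  obtain ⟨ε, hε, hsum⟩ := ENNReal.exists_pos_sum_of_countable' (one_ne_zero) ℕ
  have hO : ∀ k, ∃ O, N ⊆ O ∧ IsOpen O ∧ μ O < ε k := fun k =>
    N.exists_isOpen_lt_of_lt _ (by rw [hN]; exact hε k)
  choose O hNO hOo hOm using hO
  have : Countable (TopologicalSpace.Clopens X) :=
    TopologicalSpace.Clopens.countable_iff_secondCountable.2 inferInstance
  obtain ⟨Cl, hCl⟩ := exists_surjective_nat (TopologicalSpace.Clopens X)
  let L : ℕ → ℕ → Set X := fun k j => if (Cl j : Set X) ⊆ O k then (Cl j : Set X) else ∅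
  have hL : ∀ k j, IsClopen (L k j) := by
    intro k j
    dsimp only [L]
    split_ifs
    · exact (Cl j).isClopen
    · exact isClopen_empty
  have hLO : ∀ k, ⋃ j, L k j = O k := by
    intro k
    apply subset_antisymm
    · refine iUnion_subset fun j => ?_
      dsimp only [L]
      split_ifs with h
      · exact h
      · exact empty_subset _
    · intro x hx
      obtain ⟨V, hV, hxV, hVO⟩ := compact_exists_isClopen_in_isOpen (hOo k) hx
      obtain ⟨j, hj⟩ := hCl ⟨V, hV⟩
      refine mem_iUnion.2 ⟨j, ?_⟩
      simpa [L, hj, hVO] using hxV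
  have hK : ∀ k j, IsClopen (disjointed (L k) j) := fun k j =>
    disjointedRec (fun t i ht => ht.diff (hL k i)) (hL k j)
  refine ⟨fun n => disjointed (L n.unpair.1) n.unpair.2, fun n => hK _ _, ?_, ?_⟩
  · have e1 : ∑' n : ℕ, μ (disjointed (L n.unpair.1) n.unpair.2)
        = ∑' p : ℕ × ℕ, μ (disjointed (L p.1) p.2) :=
      Nat.pairEquiv.symm.tsum_eq (fun p : ℕ × ℕ => μ (disjointed (L p.1) p.2))
    rw [e1, ENNReal.tsum_prod']
    refine ne_top_of_le_ne_top (hsum.trans ENNReal.one_lt_top).ne (ENNReal.tsum_le_tsum fun k => ?_)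
    rw [← measure_iUnion (disjoint_disjointed _) (fun j => (hK k j).2.measurableSet),
      iUnion_disjointed, hLO]
    exact (hOm k).le
  · intro x hx m
    have := hNO m hx
    rw [← hLO, ← iUnion_disjointed] at this
    obtain ⟨j, hj⟩ := mem_iUnion.1 this
    exact ⟨Nat.pair m j, Nat.left_le_pair _ _, by simpa using hj⟩

/-- Given a state, a null set `N` and a comeager set `G`, there are two measure-preserving
homeomorphisms extending the state such that each point of `N` is sent into `G` by one of them. -/
lemma exists_two_homeos [IsFiniteMeasure μ] [μ.OuterRegular] [CompactSpace X] [T2Space X]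
    [TotallyDisconnectedSpace X] [SecondCountableTopology X]
    (hpos : ∀ U : Set X, IsOpen U → U.Nonempty → 0 < μ U)
    (hsc : ∀ U V : Set X, IsClopen U → IsClopen V → μ U < μ V →
      ∃ W, W ⊆ V ∧ IsClopen W ∧ μ W = μ U)
    (s₀ : PState μ) {G N : Set X} (hG : G ∈ residual X) (hN : μ N = 0) :
    ∃ h : Fin 2 → X ≃ₜ X, (∀ i, ∀ S : Set X, MeasurableSet S → μ (h i '' S) = μ S) ∧
      (∀ i x, s₀.b (h i x) = s₀.a x) ∧ ∀ x ∈ N, ∃ i, h i x ∈ G := by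
  obtain ⟨C, hC, hCsum, hCN⟩ := exists_limsup_cover hN
  obtain ⟨D, hDo, hDd, hDa, hDG⟩ := exists_antitone_dense hG
  have : Countable (TopologicalSpace.Clopens X) :=
    TopologicalSpace.Clopens.countable_iff_secondCountable.2 inferInstance
  obtain ⟨Cl, hCl⟩ := exists_surjective_nat (TopologicalSpace.Clopens X)
  -- each clopen set is decided at two consecutive stages `n`, hence in both constructions
  have hstep : ∀ (s : PState μ) (n : ℕ), ∃ M : ℕ, ∀ m c : ℕ, ∃ t : PState μ, M ≤ m →
      Refines s t ∧ (∃ S T, (Cl (n / 2) : Set X) = t.a ⁻¹' S ∧ (Cl (n / 2) : Set X) = t.b ⁻¹' T) ∧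
      ∀ k, m ≤ k → k < c → ∀ x y, x ∈ C k → t.a x = t.b y → y ∈ D n := by
    intro s n
    obtain ⟨δ, hδ, h⟩ := s.exists_send_into hpos hsc (hDo n) (hDd n)
    have htail := (ENNReal.tendsto_sum_nat_add _ hCsum).eventually (gt_mem_nhds hδ)
    obtain ⟨M, hM⟩ := Filter.eventually_atTop.1 htail
    refine ⟨M, fun m c => ?_⟩
    by_cases hm : M ≤ m
    · have hE : IsClopen (⋃ k ∈ Finset.Ico m c, C k) :=
        isClopen_biUnion_finset fun k _ => hC k
      have hlt : μ (⋃ k ∈ Finset.Ico m c, C k) < δ := by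
        refine lt_of_le_of_lt ?_ (hM m hm)
        refine le_trans (measure_mono ?_) (measure_iUnion_le fun k => C (k + m))
        intro x hx
        simp only [mem_iUnion, Finset.mem_Ico] at hx ⊢
        obtain ⟨k, ⟨hk, -⟩, hx⟩ := hx
        exact ⟨k - m, by rwa [Nat.sub_add_cancel hk]⟩
      obtain ⟨t, hst, ht⟩ := h _ hE hlt
      obtain ⟨u, htu, hu⟩ := t.exists_determine_both hsc (Cl (n / 2)).isClopen
      refine ⟨u, fun _ => ⟨hst.trans htu, hu, fun k hk hkc x y hx hxy => ?_⟩⟩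
      refine ht x y ?_ (htu.eq hxy)
      simp only [mem_iUnion, Finset.mem_Ico]
      exact ⟨k, ⟨hk, hkc⟩, hx⟩
    · exact ⟨s, fun h => absurd h hm⟩
  choose M step hstep using hstep
  -- The triple holds the state about to be refined, the state of the other construction, and the
  -- start `c n` of the current block; the block ends where the other construction can take over.
  let next : ℕ → PState μ × PState μ × ℕ → PState μ × PState μ × ℕ := fun n p =>
    let c' := max (p.2.2 + 1) (M p.2.1 (n + 1))
    (p.2.1, step p.1 n p.2.2 c', c')
  let u : ℕ → PState μ × PState μ × ℕ := fun n =>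
    Nat.rec (s₀, s₀, M s₀ 0) next n
  have hu : ∀ n, u (n + 1) = next n (u n) := fun n => rfl
  let c : ℕ → ℕ := fun n => (u n).2.2
  let S : ℕ → PState μ := fun n => (u n).1
  have hc : ∀ n, c n < c (n + 1) := fun n => by
    have : c (n + 1) = max (c n + 1) (M (u n).2.1 (n + 1)) := rfl
    rw [this]
    exact lt_max_of_lt_left (Nat.lt_succ_self _)
  have hM : ∀ n, M (S n) n ≤ c n := by
    intro n
    cases n with
    | zero => exact le_rfl
    | succ n => exact le_max_right _ _
  have hS2 : ∀ n, S (n + 2) = step (S n) n (c n) (c (n + 1)) := fun n => rfl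
  have hS : ∀ n, _ := fun n => hstep (S n) n (c n) (c (n + 1)) (hM n)
  simp only [← hS2] at hS
  have hcm : StrictMono c := strictMono_nat_of_lt_succ hc
  have hhom : ∀ i : Fin 2, ∃ h : X ≃ₜ X, (∀ S : Set X, MeasurableSet S → μ (h '' S) = μ S) ∧
      ∀ n x, (S (2 * n + i)).b (h x) = (S (2 * n + i)).a x := by
    intro i
    refine exists_homeo hpos (fun n => S (2 * n + i)) (fun n => ?_) fun E hE => ?_
    · have := (hS (2 * n + i)).1
      rwa [show 2 * n + (i : ℕ) + 2 = 2 * (n + 1) + i by ring] at this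
    · obtain ⟨j, hj⟩ := hCl ⟨E, hE⟩
      refine ⟨j + 1, ?_⟩
      have := (hS (2 * j + i)).2.1
      rwa [show (2 * j + (i : ℕ)) / 2 = j by omega, hj,
        show 2 * j + (i : ℕ) + 2 = 2 * (j + 1) + i by ring] at this
  choose h hh1 hh2 using hhom
  refine ⟨h, hh1, fun i x => ?_, fun x hx => ?_⟩
  · have := hh2 i 0 x
    fin_cases i <;> exact this
  · by_contra! hcon
    -- each image escapes some `D n`
    have : ∀ i, ∃ n, h i x ∉ D n := by
      intro i
      by_contra! hi
      exact hcon i (hDG (mem_iInter.2 hi))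
    choose p hp using this
    obtain ⟨k, hk, hxk⟩ := hCN x hx (c (max (p 0) (p 1)))
    obtain ⟨n, hn1, hn2⟩ : ∃ n, c n ≤ k ∧ k < c (n + 1) := by
      have hex : ∃ n, k < c n := ⟨k + 1, lt_of_lt_of_le (Nat.lt_succ_self k) (hcm.id_le _)⟩
      classical
      have h1 := Nat.find_spec hex
      have h2 : ∀ m < Nat.find hex, ¬ k < c m := fun m hm => Nat.find_min hex hm
      rcases hq : Nat.find hex with _ | q
      · rw [hq] at h1
        exact absurd (lt_of_lt_of_le h1 (hcm.monotone (Nat.zero_le _))) (not_lt.2 hk)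
      · rw [hq] at h1 h2
        exact ⟨q, not_lt.1 (h2 q (Nat.lt_succ_self q)), h1⟩
    have hnp : max (p 0) (p 1) ≤ n := by
      by_contra! hlt
      have := hcm.monotone (Nat.succ_le_of_lt hlt)
      exact absurd (lt_of_le_of_lt hk hn2) (not_lt.2 this)
    have hlt : n % 2 < 2 := Nat.mod_lt _ two_pos
    have hDn : h ⟨n % 2, hlt⟩ x ∈ D n := by
      refine (hS n).2.2 k hn1 hn2 x _ hxk ?_
      have := hh2 ⟨n % 2, hlt⟩ (n / 2 + 1) x
      rw [show 2 * (n / 2 + 1) + ((⟨n % 2, hlt⟩ : Fin 2) : ℕ) = n + 2 by simp only; omega] at this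
      exact this.symm
    refine hp ⟨n % 2, hlt⟩ (hDa ?_ hDn)
    refine le_trans ?_ hnp
    generalize (⟨n % 2, hlt⟩ : Fin 2) = i
    fin_cases i
    · exact le_max_left _ _
    · exact le_max_right _ _

/-- A partial isomorphism carrying a clopen set onto another of the same measure. -/
lemma exists_state_of_measure_eq [IsFiniteMeasure μ] {P W : Set X} (hP : IsClopen P)
    (hW : IsClopen W) (h : μ P = μ W) : ∃ s : PState μ, P = s.a ⁻¹' {i | Odd i} ∧
      W = s.b ⁻¹' {i | Odd i} := by
  let s : PState μ := ⟨fun _ => 0, fun _ => 0, continuous_const, continuous_const, fun _ => rfl⟩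
  obtain ⟨t, -, ht⟩ := s.exists_extend hP hW (fun i => by
    by_cases hi : 0 = i
    · simp [s, hi, h]
    · have : (fun _ : X => (0 : ℕ)) ⁻¹' {i} = ∅ := by ext; simpa using hi
      simp [s, this])
  exact ⟨t, ht⟩

end PState

/-- An invariant ideal with a base of sets with the Baire property containing a
non-meager set contains every null set. -/
theorem stmt13 {X : Type*} [TopologicalSpace X] [CompactSpace X] [T2Space X]
    [TopologicalSpace.MetrizableSpace X] [TotallyDisconnectedSpace X]
    [MeasurableSpace X] [BorelSpace X]
    (μ : MeasureTheory.Measure X) [MeasureTheory.IsFiniteMeasure μ]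
    (hperf : ∀ x : X, ¬ IsOpen ({x} : Set X))
    (hcont : ∀ x : X, μ {x} = 0)
    (hpos : ∀ U : Set X, IsOpen U → U.Nonempty → 0 < μ U)
    (hsc : ∀ U V : Set X, IsClopen U → IsClopen V → μ U < μ V →
      ∃ W, W ⊆ V ∧ IsClopen W ∧ μ W = μ U)
    (I : Set (Set X))
    (hdown : ∀ A ∈ I, ∀ B : Set X, B ⊆ A → B ∈ I)
    (hcup : ∀ A ∈ I, ∀ B ∈ I, A ∪ B ∈ I)
    (hinv : ∀ h : X ≃ₜ X, (∀ S : Set X, MeasurableSet S → μ (h '' S) = μ S) →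
      ∀ A ∈ I, h '' A ∈ I)
    (hbase : ∀ A ∈ I, ∃ B ∈ I, A ⊆ B ∧ ∃ U : Set X, IsOpen U ∧ IsMeagre (symmDiff B U))
    (hbig : ∃ A ∈ I, ¬ IsMeagre A) :
    ∀ N : Set X, μ N = 0 → N ∈ I := by
  obtain ⟨A, hAI, hA⟩ := hbig
  obtain ⟨B, hBI, hAB, U, hU, hBU⟩ := hbase A hAI
  have hUne : U.Nonempty := by
    by_contra hne
    rw [not_nonempty_iff_eq_empty] at hne
    subst hne
    refine hA (hBU.mono ?_)
    rwa [show symmDiff B (∅ : Set X) = B from symmDiff_bot B]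
  obtain ⟨z, hz⟩ := hUne
  obtain ⟨V, hV, hzV, hVU⟩ := compact_exists_isClopen_in_isOpen hU hz
  have hG : (V \ B)ᶜ ∈ residual X := by
    have : IsMeagre (V \ B) := hBU.mono fun x hx => Or.inr ⟨hVU hx.1, hx.2⟩
    exact this
  have hVpos : 0 < μ V := hpos V hV.2 ⟨z, hzV⟩
  intro N hN
  have hsmall : ∀ P : Set X, IsClopen P → μ P < μ V → N ∩ P ∈ I := by
    intro P hP hPV
    obtain ⟨W, hWV, hW, hWP⟩ := hsc P V hP hV hPV
    obtain ⟨s, hsP, hsW⟩ := PState.exists_state_of_measure_eq hP hW hWP.symm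
    obtain ⟨h, hmp, hs, hN'⟩ := PState.exists_two_homeos hpos hsc s hG hN
    have hsym : ∀ i, ∀ S : Set X, MeasurableSet S → μ ((h i).symm '' S) = μ S := by
      intro i S hS
      have hm : MeasurableSet ((h i).symm '' S) := by
        rw [(h i).symm.image_eq_preimage_symm]
        exact (h i).continuous.measurable hS
      rw [← hmp i _ hm, ← image_comp]
      simp
    refine hdown _ (hcup _ (hinv (h 0).symm (hsym 0) B hBI) _ (hinv (h 1).symm (hsym 1) B hBI)) _ ?_
    rintro x ⟨hxN, hxP⟩
    obtain ⟨i, hi⟩ := hN' x hxN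
    have hiW : h i x ∈ W := by
      rw [hsW, mem_preimage, hs]
      rw [hsP] at hxP
      exact hxP
    have hiB : h i x ∈ B := by
      by_contra hnot
      exact hi ⟨hWV hiW, hnot⟩
    have : x ∈ (h i).symm '' B := ⟨h i x, hiB, (h i).symm_apply_apply x⟩
    fin_cases i
    · exact Or.inl this
    · exact Or.inr this
  have := isCompact_univ.induction_on (p := fun S => N ∩ S ∈ I)
    (hdown A hAI _ (by simp)) (fun S T hST hT => hdown _ hT _ (inter_subset_inter_right _ hST))
    (fun S T hS hT => by rw [inter_union_distrib_left]; exact hcup _ hS _ hT)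
    (fun x _ => by
      obtain ⟨O, hxO, hO, hOm⟩ := ({x} : Set X).exists_isOpen_lt_of_lt (μ := μ) (μ V)
        (by rwa [hcont])
      obtain ⟨P, hP, hxP, hPO⟩ := compact_exists_isClopen_in_isOpen hO (hxO rfl)
      exact ⟨P, mem_nhdsWithin_of_mem_nhds (hP.2.mem_nhds hxP),
        hsmall P hP ((measure_mono hPO).trans_lt hOm)⟩)
  simpa using this
end

section
/- Let (X,μ) be a good Cantor measure space and I an invariant σ-ideal on X with a base of μ-measurable sets having the Baire property. If I contains a non-meager set and a set of positive μ-measure, then I = P(X), i.e., X ∈ I. -/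
/-! The σ-ideal `I` contains a comeager set `C` and a set `E` of full measure, and a measure-preserving
homeomorphism can move the null set `Eᶜ` into `C`; hence `X` is the union of two members of `I`.

*The comeager set.* By the hypothesis on the base, `I` contains a set which is comeager in some
nonempty open set. Small clopen sets around any point are images of clopen subsets of this open set
under measure-preserving homeomorphisms, so `I` contains a set comeager near every point, and
compactness finishes the argument.

*The set of full measure.* Let `D ∈ I` be measurable of positive measure, and fix one
measure-preserving homeomorphism carrying `A` onto `B` for each of the countably many pairs of
clopen sets of equal measure. The union of the corresponding images of `D` has full measure, since
for any other set `Y` of positive measure there are clopen sets `A` and `B` of equal measure, more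
than half of which is filled by `D` and `Y` respectively (`exists_forall_inter_nonempty`).

*Moving null sets.* The core is `GoodMeasure.exists_homeomorph`: given clopen sets `A`, `B` of equal
measure, a null set `N` and an increasing sequence of closed nowhere dense sets `K n`, there is a
measure-preserving homeomorphism `h` with `h '' A = B` and `h '' N` disjoint from all `K n`. It is
built by a back-and-forth argument. A `Stage` consists of finite clopen partitions of domain and
range with corresponding cells of equal measure, of a closed nowhere dense set `K` in the range, and
of a closed set `L` disjoint from `N` in the domain, such that in every cell meeting `K` there is
strictly more mass of `L` in the domain than of `K` in the range. This strict inequality allows one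
to refine either partition and to copy the refinement to the other side (`Matched.split_left`,
`Matched.split_right`), by means of clopen subsets whose intersection with a closed set has nearly
prescribed measure (`exists_subset_prescribed`). As soon as a cell is disjoint from `K`, the next
set `K n` is used there, together with a compact set `L` of large measure disjoint from `N`
(`Stage.exists_advance`). In the limit every point of `K n` has its preimage in one of the sets `L`
(`Stage.notMem_of_forall_eq`).
-/

open MeasureTheory Set

/-- A finite Borel measure is good if it has no atoms, charges every nonempty open set, and has the
Subset Condition: a clopen set contains clopen sets of every smaller clopen measure. -/
structure GoodMeasure {X : Type*} [TopologicalSpace X] [MeasurableSpace X]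
    (μ : Measure X) : Prop where
  null_singleton : ∀ x : X, μ {x} = 0
  pos : ∀ U : Set X, IsOpen U → U.Nonempty → 0 < μ.real U
  subset : ∀ U V : Set X, IsClopen U → IsClopen V → μ.real U < μ.real V →
    ∃ W, W ⊆ V ∧ IsClopen W ∧ μ.real W = μ.real U

namespace GoodMeasure

/-! ### Clopen sets of prescribed measure -/

set_option linter.unusedSectionVars false

variable {X : Type*} [TopologicalSpace X] [CompactSpace X] [T2Space X]
  [TopologicalSpace.MetrizableSpace X] [TotallyDisconnectedSpace X]
  [MeasurableSpace X] [BorelSpace X] {μ : Measure X} [IsFiniteMeasure μ]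

/-- Additivity along a measurable set, with the piece inside written as an intersection. -/
lemma real_split (S : Set X) {T : Set X} (hT : MeasurableSet T) :
    μ.real S = μ.real (S ∩ T) + μ.real (S \ T) :=
  (measureReal_inter_add_sdiff hT).symm

lemma real_sdiff_of_subset {S T : Set X} (h : T ⊆ S) (hT : MeasurableSet T) :
    μ.real (S \ T) = μ.real S - μ.real T := by
  rw [measureReal_sdiff h hT]

/-- Borel sets are approximated in measure by clopen sets. -/
lemma exists_clopen_approx {A L : Set X} (hA : IsClopen A) (hL : MeasurableSet L)
    {ε : ℝ} (hε : 0 < ε) :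
    ∃ W ⊆ A, IsClopen W ∧ μ.real (W \ L) < ε ∧ μ.real ((A ∩ L) \ W) < ε := by
  have hAL : MeasurableSet (A ∩ L) := hA.isOpen.measurableSet.inter hL
  have hε' : ENNReal.ofReal ε ≠ 0 := by simpa using hε
  obtain ⟨F, hF, hFc, hFm⟩ := hAL.exists_isCompact_sdiff_lt (μ := μ) (by finiteness) hε'
  obtain ⟨O, hO, hOo, -, hOm⟩ := hAL.exists_isOpen_sdiff_lt (μ := μ) (by finiteness) hε'
  obtain ⟨W, hW, hFW, hWO⟩ := exists_clopen_of_closed_subset_open hFc.isClosed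
    (hOo.inter hA.isOpen) (fun x hx => ⟨hO (hF hx), (hF hx).1⟩)
  have key : ∀ S : Set X, μ S < ENNReal.ofReal ε → μ.real S < ε := fun S h =>
    (ENNReal.lt_ofReal_iff_toReal_lt (by finiteness)).1 h
  refine ⟨W, fun x hx => (hWO hx).2, hW, key _ ?_, key _ ?_⟩
  · refine (measure_mono ?_).trans_lt hOm
    exact fun x hx => ⟨(hWO hx.1).1, fun h => hx.2 h.2⟩
  · exact (measure_mono (sdiff_subset_sdiff_right hFW)).trans_lt hFm

/-- Nonempty open sets contain nonempty clopen sets of arbitrarily small measure. -/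
lemma exists_small (hμ : GoodMeasure μ) {V : Set X} (hV : IsOpen V) {x : X} (hx : x ∈ V)
    {ε : ℝ} (hε : 0 < ε) : ∃ P ⊆ V, IsClopen P ∧ x ∈ P ∧ μ.real P < ε := by
  obtain ⟨O, hO, hOo, hOm⟩ := Set.exists_isOpen_lt_of_lt ({x} : Set X) (μ := μ)
    (ENNReal.ofReal ε) (by simpa [hμ.null_singleton] using hε)
  obtain ⟨P, hP, hxP, hPV⟩ := compact_exists_isClopen_in_isOpen (hOo.inter hV) ⟨hO rfl, hx⟩
  refine ⟨P, fun y hy => (hPV hy).2, hP, hxP, ?_⟩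
  refine (ENNReal.lt_ofReal_iff_toReal_lt (by finiteness)).1 ?_
  exact (measure_mono fun y hy => (hPV hy).1).trans_lt hOm

/-- Disjoint copies of a clopen set `P` fill up a clopen set `W` until less room than `μ P` is left;
a lower bound `c` for the part of a copy outside `D` accumulates. -/
lemma exists_copies (hμ : GoodMeasure μ) {P W D : Set X} (hP : IsClopen P) (hW : IsClopen W)
    (hD : MeasurableSet D) {c : ℝ}
    (hc : ∀ A, IsClopen A → A ⊆ W → μ.real A = μ.real P → c ≤ μ.real (A \ D)) (n : ℕ)
    (hn : n * μ.real P < μ.real W) :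
    ∃ V ⊆ W, IsClopen V ∧ μ.real V = n * μ.real P ∧ n * c ≤ μ.real (V \ D) := by
  induction n with
  | zero => exact ⟨∅, empty_subset _, isClopen_empty, by simp, by simp⟩
  | succ n ih =>
    push_cast at hn ⊢
    obtain ⟨V, hVW, hV, hVm, hVD⟩ := ih (by nlinarith [measureReal_nonneg (μ := μ) (s := P)])
    have h1 := real_sdiff_of_subset (μ := μ) hVW hV.isOpen.measurableSet
    obtain ⟨A, hAV, hA, hAm⟩ := hμ.subset P (W \ V) hP (hW.diff hV) (by linarith)
    have hdis : Disjoint V A := disjoint_left.2 fun x h h' => (hAV h').2 h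
    refine ⟨V ∪ A, union_subset hVW fun x h => (hAV h).1, hV.union hA, ?_, ?_⟩
    · rw [measureReal_union hdis hA.isOpen.measurableSet, hVm, hAm]; ring
    · rw [union_sdiff_distrib, measureReal_union (hdis.mono sdiff_subset sdiff_subset)
        (hA.isOpen.measurableSet.diff hD)]
      linarith [hc A hA (fun x h => (hAV h).1) hAm]

/-- The measures of clopen subsets of a clopen set are dense. -/
lemma exists_measure_between (hμ : GoodMeasure μ) {W : Set X} (hW : IsClopen W) {u v : ℝ}
    (hu : u < μ.real W) (hv : 0 < v) (huv : u < v) :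
    ∃ V ⊆ W, IsClopen V ∧ u < μ.real V ∧ μ.real V < v := by
  rcases lt_or_ge u 0 with h0 | h0
  · exact ⟨∅, empty_subset _, isClopen_empty, by simpa using h0, by simpa using hv⟩
  obtain ⟨x, hx⟩ : W.Nonempty := nonempty_of_measureReal_ne_zero (μ := μ) (by linarith)
  obtain ⟨P, -, hP, hxP, hPm⟩ := hμ.exists_small hW.isOpen hx
    (ε := min v (μ.real W) - u) (by simp [hu, huv])
  have hP0 := hμ.pos P hP.isOpen ⟨x, hxP⟩
  have hn1 : u < ((⌊u / μ.real P⌋₊ + 1 : ℕ) : ℝ) * μ.real P := by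
    rw [← div_lt_iff₀ hP0]; exact_mod_cast Nat.lt_floor_add_one _
  have hn2 : ((⌊u / μ.real P⌋₊ + 1 : ℕ) : ℝ) * μ.real P ≤ u + μ.real P := by
    have := (le_div_iff₀ hP0).1 (Nat.floor_le (div_nonneg h0 hP0.le))
    push_cast; linarith
  have h3 := min_le_left v (μ.real W)
  have h4 := min_le_right v (μ.real W)
  obtain ⟨V, hVW, hV, hVm, -⟩ := hμ.exists_copies hP hW MeasurableSet.univ (c := 0)
    (fun _ _ _ _ => measureReal_nonneg) _ (by linarith)
  exact ⟨V, hVW, hV, by linarith, by linarith⟩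

/-- A clopen set `A` has a clopen subset with the measure of a given smaller clopen set `M`, which
moreover meets a Borel set `L` in a set of nearly prescribed measure: any value compatible with the
sizes of `M`, `A ∩ L` and `A \ L` can be attained up to an arbitrarily small error. -/
lemma exists_subset_prescribed (hμ : GoodMeasure μ) {A M L : Set X} (hA : IsClopen A)
    (hM : IsClopen M) (hL : MeasurableSet L) {p q : ℝ}
    (hm0 : 0 < μ.real M) (hmA : μ.real M < μ.real A)
    (hl0 : 0 < μ.real (A ∩ L)) (hlA : μ.real (A ∩ L) < μ.real A)
    (hpq : p < q) (hpm : p < μ.real M) (hpl : p < μ.real (A ∩ L))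
    (hq0 : 0 < q) (hqm : μ.real M - μ.real A + μ.real (A ∩ L) < q) :
    ∃ Z ⊆ A, IsClopen Z ∧ μ.real Z = μ.real M ∧ p < μ.real (Z ∩ L) ∧ μ.real (Z ∩ L) < q := by
  -- The set is the union of a part of measure about `t` of a clopen approximation `W` to `A ∩ L`
  -- and of a part of `A \ W`.
  set a := μ.real A
  set m := μ.real M
  set l := μ.real (A ∩ L)
  obtain ⟨t, ht1, ht2⟩ : ∃ t, max p (max 0 (m - a + l)) < t ∧ t < min q (min m l) := by
    refine exists_between ?_
    simp only [max_lt_iff, lt_min_iff]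
    refine ⟨⟨hpq, hq0, hqm⟩, ⟨hpm, hm0, ?_⟩, hpl, hl0, ?_⟩ <;> linarith
  simp only [max_lt_iff, lt_min_iff] at ht1 ht2
  obtain ⟨ε, hε0, hε⟩ : ∃ ε, 0 < ε ∧ ε < min (min (t - p) (t - (m - a + l)))
      (min (q - t) (min (m - t) (l - t))) / 4 := by
    refine exists_between ?_
    simp only [lt_min_iff, sub_pos, div_pos_iff_of_pos_right (show (0 : ℝ) < 4 by norm_num)]
    tauto
  rw [lt_div_iff₀ (by norm_num)] at hε
  simp only [lt_min_iff] at hε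
  obtain ⟨W, hWA, hW, hWL, hLW⟩ := exists_clopen_approx (μ := μ) hA hL hε0
  have e1 : μ.real W = μ.real (W ∩ L) + μ.real (W \ L) := real_split W hL
  have e2 : l = μ.real (A ∩ L ∩ W) + μ.real ((A ∩ L) \ W) := real_split _ hW.isOpen.measurableSet
  have e3 : A ∩ L ∩ W = W ∩ L := by
    ext x; exact ⟨fun h => ⟨h.2, h.1.2⟩, fun h => ⟨⟨hWA h.1, h.2⟩, h.1⟩⟩
  rw [e3] at e2
  have n1 : 0 ≤ μ.real (W \ L) := measureReal_nonneg
  have n2 : 0 ≤ μ.real ((A ∩ L) \ W) := measureReal_nonneg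
  obtain ⟨W₁, hW₁W, hW₁, hW₁l, hW₁u⟩ := hμ.exists_measure_between hW (u := t - ε) (v := t + ε)
    (by linarith) (by linarith) (by linarith)
  obtain ⟨W₂, hW₂M, hW₂, hW₂m⟩ := hμ.subset W₁ M hW₁ hM (by change _ < m; linarith)
  have e4 : μ.real (M \ W₂) = m - μ.real W₂ := real_sdiff_of_subset hW₂M hW₂.isOpen.measurableSet
  have e5 : μ.real (A \ W) = a - μ.real W := real_sdiff_of_subset hWA hW.isOpen.measurableSet
  obtain ⟨Y, hYA, hY, hYm⟩ := hμ.subset (M \ W₂) (A \ W) (hM.diff hW₂) (hA.diff hW) (by linarith)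
  have hdis : Disjoint W₁ Y := disjoint_left.2 fun x h h' => (hYA h').2 (hW₁W h)
  have e6 : μ.real ((W₁ ∪ Y) ∩ L) = μ.real (W₁ ∩ L) + μ.real (Y ∩ L) := by
    rw [union_inter_distrib_right, measureReal_union (hdis.mono inter_subset_left inter_subset_left)
      (hY.isOpen.measurableSet.inter hL)]
  have e7 : μ.real W₁ = μ.real (W₁ ∩ L) + μ.real (W₁ \ L) := real_split _ hL
  have e8 : μ.real (W₁ \ L) ≤ μ.real (W \ L) := measureReal_mono (sdiff_subset_sdiff_left hW₁W)
  have e9 : μ.real (Y ∩ L) ≤ μ.real ((A ∩ L) \ W) :=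
    measureReal_mono fun x h => ⟨⟨(hYA h.1).1, h.2⟩, (hYA h.1).2⟩
  have n3 : 0 ≤ μ.real (Y ∩ L) := measureReal_nonneg
  have n4 : 0 ≤ μ.real (W₁ \ L) := measureReal_nonneg
  refine ⟨W₁ ∪ Y, union_subset (hW₁W.trans hWA) fun x h => (hYA h).1, hW₁.union hY, ?_, ?_, ?_⟩
  · rw [measureReal_union hdis hY.isOpen.measurableSet]; linarith
  · rw [e6]; linarith
  · rw [e6]; linarith

/-! ### Splitting matched pairs of clopen sets -/

/-- A closed nowhere dense set. That the interior is empty is phrased as: no nonempty open set is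
contained in `K`. -/
structure Thin (K : Set X) : Prop where
  closed : IsClosed K
  nonempty_diff : ∀ U : Set X, IsOpen U → U.Nonempty → (U \ K).Nonempty

/-- The sets `A` and `B`, which are meant to be clopen, have equal measure and, in case `B` meets
`K`, there is strictly more of `L` in `A` than of `K` in `B`: no measure obstruction prevents a
measure-preserving bijection from `B` to `A` from sending `B ∩ K` into `L`. -/
def Matched (μ : Measure X) (K L A B : Set X) : Prop :=
  μ.real A = μ.real B ∧ (B ∩ K = ∅ ∨ μ.real (B ∩ K) < μ.real (A ∩ L))

lemma Thin.real_lt (hμ : GoodMeasure μ) {K U : Set X} (hK : Thin K) (hU : IsOpen U)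
    (h : U.Nonempty) : μ.real (U ∩ K) < μ.real U := by
  have h1 := real_split (μ := μ) U hK.closed.measurableSet
  have h2 := hμ.pos _ (hU.sdiff hK.closed) (hK.nonempty_diff U hU h)
  linarith

lemma matched_empty (K L : Set X) : Matched μ K L ∅ ∅ := by simp [Matched]

/-- A clopen set has a clopen subset of the measure of any given clopen set which is not larger. -/
lemma exists_subset_le (hμ : GoodMeasure μ) {A M : Set X} (hA : IsClopen A) (hM : IsClopen M)
    (h : μ.real M ≤ μ.real A) : ∃ Z ⊆ A, IsClopen Z ∧ μ.real Z = μ.real M := by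
  rcases h.lt_or_eq with h | h
  · exact hμ.subset M A hM hA h
  · exact ⟨A, subset_rfl, hA, h.symm⟩

/-- A splitting of the second set of a matched pair can be copied to the first set. -/
lemma Matched.split_right (hμ : GoodMeasure μ) {K L A B U : Set X} (hK : Thin K) (hL : Thin L)
    (hA : IsClopen A) (hB : IsClopen B) (h : Matched μ K L A B) (hU : IsClopen U) :
    ∃ Z ⊆ A, IsClopen Z ∧ Matched μ K L Z (B ∩ U) ∧ Matched μ K L (A \ Z) (B \ U) := by
  obtain ⟨hAB, h⟩ := h
  rcases (B ∩ U).eq_empty_or_nonempty with h0 | h0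
  · refine ⟨∅, empty_subset _, isClopen_empty, ?_, ?_⟩
    · rw [h0]; exact matched_empty K L
    · rw [sdiff_empty, sdiff_eq_left.2 (disjoint_iff_inter_eq_empty.2 h0)]; exact ⟨hAB, h⟩
  rcases (B \ U).eq_empty_or_nonempty with h1 | h1
  · refine ⟨A, subset_rfl, hA, ?_, ?_⟩
    · rw [inter_eq_left.2 (sdiff_eq_empty.1 h1)]; exact ⟨hAB, h⟩
    · rw [h1, sdiff_self]; exact matched_empty K L
  have hBU := hB.inter hU
  have hBU' := hB.diff hU
  have m1 : μ.real B = μ.real (B ∩ U) + μ.real (B \ U) := real_split B hU.isOpen.measurableSet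
  have p1 := hμ.pos _ hBU.isOpen h0
  have p2 := hμ.pos _ hBU'.isOpen h1
  have hdiff : ∀ Z ⊆ A, IsClopen Z → μ.real Z = μ.real (B ∩ U) →
      μ.real (A \ Z) = μ.real (B \ U) := fun Z hZA hZ hZm => by
    rw [real_sdiff_of_subset hZA hZ.isOpen.measurableSet]; linarith
  rcases h with h | h
  · obtain ⟨Z, hZA, hZ, hZm⟩ := hμ.exists_subset_le hA hBU (by linarith)
    refine ⟨Z, hZA, hZ, ⟨hZm, .inl ?_⟩, ⟨hdiff Z hZA hZ hZm, .inl ?_⟩⟩ <;>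
      refine subset_eq_empty (fun x hx => ?_) h
    exacts [⟨hx.1.1, hx.2⟩, ⟨hx.1.1, hx.2⟩]
  have k1 := hK.real_lt hμ hBU.isOpen h0
  have k2 := hK.real_lt hμ hBU'.isOpen h1
  have k3 : μ.real (B ∩ K) = μ.real (B ∩ U ∩ K) + μ.real (B \ U ∩ K) := by
    rw [real_split (B ∩ K) hU.isOpen.measurableSet]
    congr 2 <;> ext x <;> simp only [mem_inter_iff, mem_sdiff] <;> tauto
  have l1 := hL.real_lt hμ hA.isOpen (nonempty_of_measureReal_ne_zero (μ := μ) (by linarith))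
  have n1 : 0 ≤ μ.real (B ∩ U ∩ K) := measureReal_nonneg
  have n2 : 0 ≤ μ.real (B \ U ∩ K) := measureReal_nonneg
  obtain ⟨Z, hZA, hZ, hZm, hp, hq⟩ := hμ.exists_subset_prescribed hA hBU hL.closed.measurableSet
    (p := μ.real (B ∩ U ∩ K)) (q := μ.real (A ∩ L) - μ.real (B \ U ∩ K))
    p1 (by linarith) (by linarith) l1 (by linarith) k1 (by linarith) (by linarith) (by linarith)
  refine ⟨Z, hZA, hZ, ⟨hZm, .inr hp⟩, ⟨hdiff Z hZA hZ hZm, .inr ?_⟩⟩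
  have l2 : μ.real (A ∩ L) = μ.real (Z ∩ L) + μ.real (A \ Z ∩ L) := by
    rw [real_split (A ∩ L) hZ.isOpen.measurableSet]
    congr 2 <;> ext x <;> simp only [mem_inter_iff, mem_sdiff]
    · have := @hZA x; tauto
    · tauto
  linarith

/-- Inside a clopen set `B` of measure larger than `μ M + μ (B ∩ K)` there is a clopen set of
measure `μ M` disjoint from `K`. -/
lemma exists_subset_avoid (hμ : GoodMeasure μ) {B M K : Set X} (hB : IsClopen B) (hM : IsClopen M)
    (hK : IsClosed K) (h : μ.real M + μ.real (B ∩ K) < μ.real B) :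
    ∃ Z ⊆ B, IsClopen Z ∧ μ.real Z = μ.real M ∧ Z ∩ K = ∅ := by
  have h1 := real_split (μ := μ) B hK.measurableSet
  have hBK := hB.isOpen.sdiff hK
  obtain ⟨F, hF, hFc, hFm⟩ := hBK.measurableSet.exists_lt_isCompact_of_ne_top (μ := μ)
    (by finiteness) (r := μ M) ((ENNReal.toReal_lt_toReal (by finiteness) (by finiteness)).1
      (show μ.real M < μ.real (B \ K) by linarith))
  obtain ⟨W, hW, hFW, hWB⟩ := exists_clopen_of_closed_subset_open hFc.isClosed hBK hF
  obtain ⟨Z, hZW, hZ, hZm⟩ := hμ.subset M W hM hW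
    ((ENNReal.toReal_lt_toReal (by finiteness) (by finiteness)).2
      (hFm.trans_le (measure_mono hFW)))
  refine ⟨Z, fun x hx => (hWB (hZW hx)).1, hZ, hZm, ?_⟩
  exact disjoint_iff_inter_eq_empty.1 (disjoint_left.2 fun x hx => (hWB (hZW hx)).2)

/-- A splitting of the first set of a matched pair can be copied to the second set. -/
lemma Matched.split_left (hμ : GoodMeasure μ) {K L A B U : Set X} (hK : Thin K) (hL : Thin L)
    (hA : IsClopen A) (hB : IsClopen B) (h : Matched μ K L A B) (hU : IsClopen U) :
    ∃ Z ⊆ B, IsClopen Z ∧ Matched μ K L (A ∩ U) Z ∧ Matched μ K L (A \ U) (B \ Z) := by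
  obtain ⟨hAB, h⟩ := h
  have hBsub : ∀ Z ⊆ B, B \ (B \ Z) = Z := fun Z hZ => sdiff_sdiff_cancel_left hZ
  rcases (A ∩ U).eq_empty_or_nonempty with h0 | h0
  · refine ⟨∅, empty_subset _, isClopen_empty, ?_, ?_⟩
    · rw [h0]; exact matched_empty K L
    · rw [sdiff_empty, sdiff_eq_left.2 (disjoint_iff_inter_eq_empty.2 h0)]; exact ⟨hAB, h⟩
  rcases (A \ U).eq_empty_or_nonempty with h1 | h1
  · refine ⟨B, subset_rfl, hB, ?_, ?_⟩
    · rw [inter_eq_left.2 (sdiff_eq_empty.1 h1)]; exact ⟨hAB, h⟩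
    · rw [h1, sdiff_self]; exact matched_empty K L
  have hAU := hA.inter hU
  have hAU' := hA.diff hU
  have m1 : μ.real A = μ.real (A ∩ U) + μ.real (A \ U) := real_split A hU.isOpen.measurableSet
  have p1 := hμ.pos _ hAU.isOpen h0
  have p2 := hμ.pos _ hAU'.isOpen h1
  have hdiff : ∀ Z ⊆ B, IsClopen Z → μ.real Z = μ.real (A ∩ U) →
      μ.real (A \ U) = μ.real (B \ Z) := fun Z hZA hZ hZm => by
    rw [real_sdiff_of_subset hZA hZ.isOpen.measurableSet]; linarith
  rcases h with h | h
  · obtain ⟨Z, hZB, hZ, hZm⟩ := hμ.exists_subset_le hB hAU (by linarith)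
    refine ⟨Z, hZB, hZ, ⟨hZm.symm, .inl ?_⟩, ⟨hdiff Z hZB hZ hZm, .inl ?_⟩⟩ <;>
      refine subset_eq_empty (fun x hx => ?_) h
    exacts [⟨hZB hx.1, hx.2⟩, ⟨hx.1.1, hx.2⟩]
  have l1 := hL.real_lt hμ hAU.isOpen h0
  have l2 := hL.real_lt hμ hAU'.isOpen h1
  have l3 : μ.real (A ∩ L) = μ.real (A ∩ U ∩ L) + μ.real (A \ U ∩ L) := by
    rw [real_split (A ∩ L) hU.isOpen.measurableSet]
    congr 2 <;> ext x <;> simp only [mem_inter_iff, mem_sdiff] <;> tauto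
  have hk : ∀ Z ⊆ B, IsClopen Z → μ.real (B ∩ K) = μ.real (Z ∩ K) + μ.real (B \ Z ∩ K) := by
    intro Z hZB hZ
    rw [real_split (B ∩ K) hZ.isOpen.measurableSet]
    congr 2 <;> ext x <;> simp only [mem_inter_iff, mem_sdiff]
    · have := @hZB x; tauto
    · tauto
  have n1 : 0 ≤ μ.real (A ∩ U ∩ L) := measureReal_nonneg
  have n2 : 0 ≤ μ.real (A \ U ∩ L) := measureReal_nonneg
  have n3 : 0 ≤ μ.real (B ∩ K) := measureReal_nonneg
  -- If one of the two pieces of `A` has no mass in `L`, its partner has to avoid `K` altogether.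
  rcases n1.eq_or_lt with z1 | z1
  · obtain ⟨Z, hZB, hZ, hZm, hZK⟩ := hμ.exists_subset_avoid hB hAU hK.closed (by linarith)
    refine ⟨Z, hZB, hZ, ⟨hZm.symm, .inl hZK⟩, ⟨hdiff Z hZB hZ hZm, .inr ?_⟩⟩
    have := hk Z hZB hZ
    rw [hZK, measureReal_empty] at this
    linarith
  rcases n2.eq_or_lt with z2 | z2
  · obtain ⟨Z, hZB, hZ, hZm, hZK⟩ := hμ.exists_subset_avoid hB hAU' hK.closed (by linarith)
    have hm : μ.real (B \ Z) = μ.real (A ∩ U) := by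
      rw [real_sdiff_of_subset hZB hZ.isOpen.measurableSet]; linarith
    refine ⟨B \ Z, sdiff_subset, hB.diff hZ, ⟨hm.symm, .inr ?_⟩, ?_⟩
    · have := hk Z hZB hZ
      rw [hZK, measureReal_empty] at this
      linarith
    · rw [hBsub Z hZB]; exact ⟨hZm.symm, .inl hZK⟩
  rcases n3.eq_or_lt with z3 | z3
  · obtain ⟨Z, hZB, hZ, hZm⟩ := hμ.exists_subset_le hB hAU (by linarith)
    have := hk Z hZB hZ
    have i1 : 0 ≤ μ.real (Z ∩ K) := measureReal_nonneg
    have i2 : 0 ≤ μ.real (B \ Z ∩ K) := measureReal_nonneg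
    exact ⟨Z, hZB, hZ, ⟨hZm.symm, .inr (by linarith)⟩, ⟨hdiff Z hZB hZ hZm, .inr (by linarith)⟩⟩
  have k1 := hK.real_lt hμ hB.isOpen (nonempty_of_measureReal_ne_zero (μ := μ) (by linarith))
  obtain ⟨Z, hZB, hZ, hZm, hp, hq⟩ := hμ.exists_subset_prescribed hB hAU hK.closed.measurableSet
    (p := μ.real (B ∩ K) - μ.real (A \ U ∩ L)) (q := μ.real (A ∩ U ∩ L))
    p1 (by linarith) z3 k1 (by linarith) (by linarith) (by linarith) z1 (by linarith)
  have := hk Z hZB hZ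
  exact ⟨Z, hZB, hZ, ⟨hZm.symm, .inr hq⟩, ⟨hdiff Z hZB hZ hZm, .inr (by linarith)⟩⟩

/-! ### Stages of the back-and-forth construction -/

/-- Piecewise glued sets along a locally constant function are thin if the pieces are. -/
lemma Thin.glue {a : X → ℕ} (ha : Continuous a) {F : ℕ → Set X} (hF : ∀ i, Thin (F i)) :
    Thin {x | x ∈ F (a x)} := by
  refine ⟨?_, ?_⟩
  · have : {x | x ∈ F (a x)}ᶜ = ⋃ i, a ⁻¹' {i} ∩ (F i)ᶜ := by ext x; simp
    rw [← isOpen_compl_iff, this]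
    exact isOpen_iUnion fun i =>
      ((isOpen_discrete {i}).preimage ha).inter (hF i).closed.isOpen_compl
  · rintro U hU ⟨x, hx⟩
    obtain ⟨y, ⟨hyU, hya⟩, hy⟩ := (hF (a x)).nonempty_diff (U ∩ a ⁻¹' {a x})
      (hU.inter ((isOpen_discrete _).preimage ha)) ⟨x, hx, rfl⟩
    refine ⟨y, hyU, ?_⟩
    rw [mem_preimage, mem_singleton_iff] at hya
    simpa [hya] using hy

lemma Thin.empty : Thin (∅ : Set X) := ⟨isClosed_empty, by simp⟩

lemma Thin.of_disjoint_dense {L N : Set X} (hL : IsClosed L) (hN : Dense N) (h : Disjoint L N) :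
    Thin L := by
  refine ⟨hL, fun U hU hU' => ?_⟩
  obtain ⟨x, hxU, hxN⟩ := hN.inter_open_nonempty U hU hU'
  exact ⟨x, hxU, disjoint_right.1 h hxN⟩

/-- A stage of the construction of a homeomorphism `h`. The fibres of `a` and `b` are two finite
clopen partitions of `X`, and `h` is going to map each fibre of `a` onto the fibre of `b` with the
same label. The points of `K` are promised to be images of points of `L`, a set avoiding `N`. -/
structure Stage (μ : Measure X) (N : Set X) where
  /-- labels of the cells in the domain -/
  a : X → ℕ
  /-- labels of the cells in the range -/
  b : X → ℕ
  /-- the set that has to be the image of a subset of `L` -/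
  K : Set X
  /-- the set reserved for the preimage of `K` -/
  L : Set X
  continuous_a : Continuous a
  continuous_b : Continuous b
  thin_K : Thin K
  thin_L : Thin L
  disjoint : Disjoint L N
  matched : ∀ i, Matched μ K L (a ⁻¹' {i}) (b ⁻¹' {i})

namespace Stage

variable {N : Set X}

/-- The cells of `t` refine those of `s`, compatibly with the correspondence between domain and
range. -/
structure Refines (s t : Stage μ N) : Prop where
  dom : ∀ x x', t.a x = t.a x' → s.a x = s.a x'
  ran : ∀ y y', t.b y = t.b y' → s.b y = s.b y'
  cross : ∀ x y, t.a x = t.b y → s.a x = s.b y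

lemma Refines.trans {s t u : Stage μ N} (h : Refines s t) (h' : Refines t u) : Refines s u :=
  ⟨fun x x' e => h.dom x x' (h'.dom x x' e), fun x x' e => h.ran x x' (h'.ran x x' e),
    fun x x' e => h.cross x x' (h'.cross x x' e)⟩

open Classical in
/-- The label function obtained from `a` by splitting the cell with label `i` along `Z i`; the
two pieces get the labels `2 * i + 1` and `2 * i`. -/
noncomputable def refineLabel (a : X → ℕ) (Z : ℕ → Set X) (x : X) : ℕ :=
  2 * a x + if x ∈ Z (a x) then 1 else 0

lemma continuous_refineLabel {a : X → ℕ} {Z : ℕ → Set X} (ha : Continuous a)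
    (hZ : ∀ i, IsClopen (Z i)) : Continuous (refineLabel a Z) := by
  classical
  have h : ∀ i, Continuous fun x => 2 * i + if x ∈ Z i then 1 else 0 := fun i =>
    continuous_const.add (continuous_const.if
      (fun x hx => by
        have : frontier {x | x ∈ Z i} = ∅ := (hZ i).frontier_eq
        exact absurd hx (this ▸ notMem_empty x)) continuous_const)
  exact (continuous_prod_of_discrete_left
    (f := fun p : ℕ × X => 2 * p.1 + if p.2 ∈ Z p.1 then 1 else 0) |>.2 h).comp
    (ha.prodMk continuous_id)

lemma refineLabel_eq {a c : X → ℕ} {Z W : ℕ → Set X} {x y : X}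
    (h : refineLabel a Z x = refineLabel c W y) :
    a x = c y ∧ (x ∈ Z (a x) ↔ y ∈ W (c y)) := by
  unfold refineLabel at h
  split_ifs at h with h1 h2 h2 <;> refine ⟨by omega, ?_⟩ <;> first | tauto | omega

lemma refineLabel_preimage_odd (a : X → ℕ) (Z : ℕ → Set X) (i : ℕ) :
    refineLabel a Z ⁻¹' {2 * i + 1} = a ⁻¹' {i} ∩ Z i := by
  ext x
  simp only [refineLabel, mem_preimage, mem_singleton_iff, mem_inter_iff]
  constructor
  · intro h
    split_ifs at h with h1
    · have : a x = i := by omega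
      exact ⟨this, this ▸ h1⟩
    · omega
  · rintro ⟨rfl, h⟩; simp [h]

lemma refineLabel_preimage_even (a : X → ℕ) (Z : ℕ → Set X) (i : ℕ) :
    refineLabel a Z ⁻¹' {2 * i} = a ⁻¹' {i} \ Z i := by
  ext x
  simp only [refineLabel, mem_preimage, mem_singleton_iff, mem_sdiff]
  constructor
  · intro h
    split_ifs at h with h1
    · omega
    · have : a x = i := by omega
      exact ⟨this, this ▸ h1⟩
  · rintro ⟨rfl, h⟩; simp [h]

/-- Splitting cells simultaneously in domain and range. -/
lemma exists_split (s : Stage μ N) {Z W : ℕ → Set X} (hZ : ∀ i, IsClopen (Z i))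
    (hW : ∀ i, IsClopen (W i))
    (h1 : ∀ i, Matched μ s.K s.L (s.a ⁻¹' {i} ∩ Z i) (s.b ⁻¹' {i} ∩ W i))
    (h2 : ∀ i, Matched μ s.K s.L (s.a ⁻¹' {i} \ Z i) (s.b ⁻¹' {i} \ W i)) :
    ∃ t : Stage μ N, Refines s t ∧ t.K = s.K ∧ t.L = s.L ∧
      t.a = refineLabel s.a Z ∧ t.b = refineLabel s.b W := by
  refine ⟨⟨refineLabel s.a Z, refineLabel s.b W, s.K, s.L, continuous_refineLabel s.continuous_a hZ,
    continuous_refineLabel s.continuous_b hW, s.thin_K, s.thin_L, s.disjoint, fun i => ?_⟩,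
    ⟨fun x x' h => (refineLabel_eq h).1, fun x x' h => (refineLabel_eq h).1,
      fun x x' h => (refineLabel_eq h).1⟩, rfl, rfl, rfl, rfl⟩
  rcases Nat.even_or_odd' i with ⟨j, rfl | rfl⟩
  · rw [refineLabel_preimage_even, refineLabel_preimage_even]; exact h2 j
  · rw [refineLabel_preimage_odd, refineLabel_preimage_odd]; exact h1 j

lemma isClopen_a (s : Stage μ N) (i : ℕ) : IsClopen (s.a ⁻¹' {i}) :=
  (isClopen_discrete _).preimage s.continuous_a

lemma isClopen_b (s : Stage μ N) (i : ℕ) : IsClopen (s.b ⁻¹' {i}) :=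
  (isClopen_discrete _).preimage s.continuous_b

lemma exists_split_ran (hμ : GoodMeasure μ) (s : Stage μ N) {U : Set X} (hU : IsClopen U) :
    ∃ t : Stage μ N, Refines s t ∧ t.K = s.K ∧ t.L = s.L ∧
      ∀ y y', t.b y = t.b y' → (y ∈ U ↔ y' ∈ U) := by
  choose Z hZA hZ h1 h2 using fun i => (s.matched i).split_right hμ s.thin_K s.thin_L
    (s.isClopen_a i) (s.isClopen_b i) hU
  obtain ⟨t, ht, hK, hL, -, hb⟩ := s.exists_split hZ (W := fun _ => U) (fun _ => hU)
    (fun i => by rw [inter_eq_right.2 (hZA i)]; exact h1 i) h2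
  exact ⟨t, ht, hK, hL, fun y y' h => (refineLabel_eq (hb ▸ h)).2⟩

lemma exists_split_dom (hμ : GoodMeasure μ) (s : Stage μ N) {U : Set X} (hU : IsClopen U) :
    ∃ t : Stage μ N, Refines s t ∧ t.K = s.K ∧ t.L = s.L ∧
      ∀ x x', t.a x = t.a x' → (x ∈ U ↔ x' ∈ U) := by
  choose Z hZA hZ h1 h2 using fun i => (s.matched i).split_left hμ s.thin_K s.thin_L
    (s.isClopen_a i) (s.isClopen_b i) hU
  obtain ⟨t, ht, hK, hL, ha, -⟩ := s.exists_split (Z := fun _ => U) (W := Z) (fun _ => hU) hZ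
    (fun i => by rw [inter_eq_right.2 (hZA i)]; exact h1 i) h2
  exact ⟨t, ht, hK, hL, fun y y' h => (refineLabel_eq (ha ▸ h)).2⟩

/-- In the cells which no longer meet `K`, the set `K` may be replaced by any other thin set
`K'`. -/
lemma exists_advance (hμ : GoodMeasure μ) (hN : MeasurableSet N) (hN0 : μ N = 0) (hNd : Dense N)
    (s : Stage μ N) {K' : Set X} (hK' : Thin K') :
    ∃ t : Stage μ N, Refines s t ∧
      (∀ y z, s.b z = s.b y → z ∈ s.K → (y ∈ t.K ↔ y ∈ s.K)) ∧
      (∀ x z, s.b z = s.a x → z ∈ s.K → (x ∈ t.L ↔ x ∈ s.L)) ∧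
      (∀ y, (∀ z, s.b z = s.b y → z ∉ s.K) → y ∈ K' → y ∈ t.K) := by
  have key : ∀ i, ∃ F G : Set X, Thin F ∧ Thin G ∧ Disjoint G N ∧
      Matched μ F G (s.a ⁻¹' {i}) (s.b ⁻¹' {i}) ∧
      ((s.b ⁻¹' {i} ∩ s.K).Nonempty → F = s.K ∧ G = s.L) ∧
      (s.b ⁻¹' {i} ∩ s.K = ∅ → F = K') := by
    intro i
    rcases (s.b ⁻¹' {i} ∩ s.K).eq_empty_or_nonempty with h | h
    · refine ⟨K', ?_⟩
      have h1 := (s.matched i).1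
      rcases (s.b ⁻¹' {i}).eq_empty_or_nonempty with h0 | h0
      · exact ⟨∅, hK', Thin.empty, empty_disjoint _, ⟨h1, .inl (by rw [h0, empty_inter])⟩,
          fun h' => absurd h h'.ne_empty, fun _ => rfl⟩
      have h2 := hK'.real_lt hμ (s.isClopen_b i).isOpen h0
      have h3 : μ (s.a ⁻¹' {i} \ N) = μ (s.a ⁻¹' {i}) := measure_sdiff_null hN0
      obtain ⟨G, hG, hGc, hGm⟩ :=
        ((s.isClopen_a i).isOpen.measurableSet.diff hN).exists_lt_isCompact_of_ne_top (μ := μ)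
          (by finiteness) (r := μ (s.b ⁻¹' {i} ∩ K'))
          ((ENNReal.toReal_lt_toReal (by finiteness) (by finiteness)).1
            (by rw [h3]; exact h2.trans_eq h1.symm))
      have hGN : Disjoint G N := disjoint_left.2 fun x hx => (hG hx).2
      refine ⟨G, hK', Thin.of_disjoint_dense hGc.isClosed hNd hGN, hGN, ⟨h1, .inr ?_⟩,
        fun h' => absurd h h'.ne_empty, fun _ => rfl⟩
      rw [inter_eq_right.2 fun x hx => (hG hx).1]
      exact (ENNReal.toReal_lt_toReal (by finiteness) (by finiteness)).2 hGm
    · exact ⟨s.K, s.L, s.thin_K, s.thin_L, s.disjoint, s.matched i, fun _ => ⟨rfl, rfl⟩,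
        fun h' => absurd h' h.ne_empty⟩
  choose F G hF hG hGN hFG h1 h2 using key
  refine ⟨⟨s.a, s.b, {y | y ∈ F (s.b y)}, {x | x ∈ G (s.a x)}, s.continuous_a, s.continuous_b,
    Thin.glue s.continuous_b hF, Thin.glue s.continuous_a hG,
    disjoint_left.2 fun x hx => disjoint_left.1 (hGN _) hx, fun i => ?_⟩,
    ⟨fun _ _ h => h, fun _ _ h => h, fun _ _ h => h⟩, ?_, ?_, ?_⟩
  · have e1 : s.b ⁻¹' {i} ∩ {y | y ∈ F (s.b y)} = s.b ⁻¹' {i} ∩ F i := by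
      ext y; simp +contextual
    have e2 : s.a ⁻¹' {i} ∩ {y | y ∈ G (s.a y)} = s.a ⁻¹' {i} ∩ G i := by
      ext y; simp +contextual
    rw [Matched, e1, e2]
    exact hFG i
  · intro y z hzy hz
    rw [mem_ofPred_eq, (h1 (s.b y) ⟨z, hzy, hz⟩).1]
  · intro x z hzx hz
    rw [mem_ofPred_eq, (h1 (s.a x) ⟨z, hzx, hz⟩).2]
  · intro y hy hyK
    rw [mem_ofPred_eq, h2]
    · exact hyK
    · exact disjoint_iff_inter_eq_empty.1 (disjoint_left.2 fun z hz => hy z hz)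

/-- One step of the construction: `K` is replaced by `K'` where possible, and the cells in domain
and range are made fine enough to decide membership in the clopen set `U`. -/
lemma exists_step (hμ : GoodMeasure μ) (hN : MeasurableSet N) (hN0 : μ N = 0) (hNd : Dense N)
    (s : Stage μ N) {K' U : Set X} (hK' : Thin K') (hU : IsClopen U) :
    ∃ t : Stage μ N, Refines s t ∧
      (∀ y z, s.b z = s.b y → z ∈ s.K → (y ∈ t.K ↔ y ∈ s.K)) ∧
      (∀ x z, s.b z = s.a x → z ∈ s.K → (x ∈ t.L ↔ x ∈ s.L)) ∧
      (∀ y, (∀ z, s.b z = s.b y → z ∉ s.K) → y ∈ K' → y ∈ t.K) ∧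
      (∀ x x', t.a x = t.a x' → (x ∈ U ↔ x' ∈ U)) ∧
      (∀ y y', t.b y = t.b y' → (y ∈ U ↔ y' ∈ U)) := by
  obtain ⟨t, ht, h1, h2, h3⟩ := s.exists_advance hμ hN hN0 hNd hK'
  obtain ⟨u, hu, uK, uL, h4⟩ := t.exists_split_ran hμ hU
  obtain ⟨v, hv, vK, vL, h5⟩ := u.exists_split_dom hμ hU
  rw [uK] at vK
  rw [uL] at vL
  refine ⟨v, (ht.trans hu).trans hv, ?_, ?_, ?_, h5, fun y y' h => h4 y y' (hv.ran y y' h)⟩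
  · rwa [vK]
  · rwa [vL]
  · rwa [vK]

end Stage

/-! ### The limit of a sequence of stages -/

namespace Stage

variable {N : Set X}

lemma refines_of_le {s : ℕ → Stage μ N} (hr : ∀ n, Refines (s n) (s (n + 1))) {m n : ℕ}
    (h : m ≤ n) : Refines (s m) (s n) := by
  induction n, h using Nat.le_induction with
  | base => exact ⟨fun _ _ h => h, fun _ _ h => h, fun _ _ h => h⟩
  | succ n _ ih => exact ih.trans (hr n)

/-- Compactness: a decreasing sequence of nonempty fibres has a common point. -/
lemma exists_forall_eq {c : ℕ → X → ℕ} (hc : ∀ n, Continuous (c n)) {i : ℕ → ℕ}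
    (hne : ∀ n, ∃ y, c n y = i n) (hdec : ∀ n y, c (n + 1) y = i (n + 1) → c n y = i n) :
    ∃ y, ∀ n, c n y = i n := by
  have hcl : ∀ n, IsClosed (c n ⁻¹' {i n}) := fun n => (isClosed_discrete _).preimage (hc n)
  obtain ⟨y, hy⟩ := IsCompact.nonempty_iInter_of_sequence_nonempty_isCompact_isClosed
    (fun n => c n ⁻¹' {i n}) hdec hne (hcl 0).isCompact hcl
  exact ⟨y, mem_iInter.1 hy⟩

lemma eq_of_forall_clopen {x y : X} (h : ∀ U : Set X, IsClopen U → (x ∈ U ↔ y ∈ U)) : x = y := by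
  by_contra hxy
  obtain ⟨U, hU, hxU, hUy⟩ := compact_exists_isClopen_in_isOpen
    (isOpen_compl_singleton (x := y)) (mem_compl_singleton_iff.2 hxy)
  exact hUy ((h U hU).1 hxU) rfl

lemma exists_b_eq (hμ : GoodMeasure μ) (s : Stage μ N) (x : X) : ∃ y, s.b y = s.a x := by
  have h := hμ.pos _ (s.isClopen_a (s.a x)).isOpen ⟨x, rfl⟩
  rw [(s.matched _).1] at h
  exact nonempty_of_measureReal_ne_zero h.ne'

lemma exists_a_eq (hμ : GoodMeasure μ) (s : Stage μ N) (y : X) : ∃ x, s.a x = s.b y := by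
  have h := hμ.pos _ (s.isClopen_b (s.b y)).isOpen ⟨y, rfl⟩
  rw [← (s.matched _).1] at h
  exact nonempty_of_measureReal_ne_zero h.ne'

lemma measure_preimage (s : Stage μ N) (T : Set ℕ) : μ (s.a ⁻¹' T) = μ (s.b ⁻¹' T) := by
  have h : μ.map s.a = μ.map s.b := by
    refine Measure.ext_of_singleton fun i => ?_
    rw [Measure.map_apply s.continuous_a.measurable (measurableSet_singleton i),
      Measure.map_apply s.continuous_b.measurable (measurableSet_singleton i)]
    exact (measureReal_eq_measureReal_iff).1 (s.matched i).1
  rw [← Measure.map_apply s.continuous_a.measurable .of_discrete, h,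
    Measure.map_apply s.continuous_b.measurable .of_discrete]

/-- A sequence of stages whose cells become arbitrarily fine determines a measure-preserving
homeomorphism, matching cells with equal labels. -/
lemma exists_homeomorph (hμ : GoodMeasure μ) {s : ℕ → Stage μ N}
    (hr : ∀ n, Refines (s n) (s (n + 1)))
    (hU : ∀ U : Set X, IsClopen U → ∃ n, (∀ x x', (s n).a x = (s n).a x' → (x ∈ U ↔ x' ∈ U)) ∧
      (∀ y y', (s n).b y = (s n).b y' → (y ∈ U ↔ y' ∈ U))) :
    ∃ h : X ≃ₜ X, (∀ n x, (s n).b (h x) = (s n).a x) ∧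
      ∀ S : Set X, MeasurableSet S → μ (h '' S) = μ S := by
  choose f hf using fun x => exists_forall_eq (fun n => (s n).continuous_b)
    (i := fun n => (s n).a x) (fun n => (s n).exists_b_eq hμ x)
    (fun n y h => ((hr n).cross x y h.symm).symm)
  choose g hg using fun y => exists_forall_eq (fun n => (s n).continuous_a)
    (i := fun n => (s n).b y) (fun n => (s n).exists_a_eq hμ y)
    (fun n x h => (hr n).cross x y h)
  have hgf : ∀ x, g (f x) = x := fun x => eq_of_forall_clopen fun U hUc => by
    obtain ⟨n, hn, -⟩ := hU U hUc
    exact hn _ _ ((hg _ n).trans (hf _ n))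
  have hfg : ∀ y, f (g y) = y := fun y => eq_of_forall_clopen fun U hUc => by
    obtain ⟨n, -, hn⟩ := hU U hUc
    exact hn _ _ ((hf _ n).trans (hg _ n))
  have pre : ∀ U : Set X, IsClopen U → ∃ n, ∃ T : Set ℕ, U = (s n).b ⁻¹' T ∧
      f ⁻¹' U = (s n).a ⁻¹' T := by
    intro U hUc
    obtain ⟨n, -, hn⟩ := hU U hUc
    have e : U = (s n).b ⁻¹' ((s n).b '' U) := by
      refine (subset_preimage_image _ _).antisymm ?_
      rintro y ⟨z, hz, hzy⟩
      exact (hn z y hzy).1 hz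
    refine ⟨n, (s n).b '' U, e, ?_⟩
    ext x
    rw [mem_preimage (f := (s n).a), ← hf x n]
    exact iff_of_eq (congrArg (f x ∈ ·) e)
  have hfc : Continuous f := isTopologicalBasis_isClopen.continuous_iff.2 fun U hUc => by
    obtain ⟨n, T, -, h⟩ := pre U hUc
    rw [h]
    exact (isOpen_discrete T).preimage (s n).continuous_a
  have hmap : μ.map f = μ := by
    refine ext_of_generate_finite {U : Set X | IsClopen U}
      (by rw [BorelSpace.measurable_eq (α := X)]
          exact isTopologicalBasis_isClopen.borel_eq_generateFrom)
      (fun U hU V hV _ => IsClopen.inter hU hV) (fun U hUc => ?_) ?_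
    · rw [Measure.map_apply hfc.measurable (IsClopen.isOpen hUc).measurableSet]
      obtain ⟨n, T, h1, h2⟩ := pre U hUc
      rw [h2, measure_preimage, ← h1]
    · rw [Measure.map_apply hfc.measurable .univ, preimage_univ]
  let e : X ≃ X := ⟨f, g, hgf, hfg⟩
  let h : X ≃ₜ X := Continuous.homeoOfEquivCompactToT2 (f := e) hfc
  refine ⟨h, fun n x => hf x n, fun S hS => ?_⟩
  have h1 : MeasurableSet (h '' S) := h.measurableEmbedding.measurableSet_image.2 hS
  have h2 : f ⁻¹' (h '' S) = S := h.injective.preimage_image S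
  conv_lhs => rw [← hmap, Measure.map_apply hfc.measurable h1, h2]

/-- In a sequence of stages as provided by `exists_step`, no point of `N` corresponds to a point of
some `K n`. Indeed, a point `y ∈ K n` eventually enters the sets `(s m).K`: otherwise, from stage
`n` on, the cells of `y` meet these sets, which are then all equal to the closed set `(s n).K` near
`y`. Once `y` has entered, the sets `(s m).L` no longer change near the point corresponding to `y`,
which is therefore a limit of points of the closed set `(s m).L`. -/
lemma notMem_of_forall_eq {s : ℕ → Stage μ N} {K : ℕ → Set X}
    (hr : ∀ n, Refines (s n) (s (n + 1)))
    (hU : ∀ U : Set X, IsClopen U → ∃ n, (∀ x x', (s n).a x = (s n).a x' → (x ∈ U ↔ x' ∈ U)) ∧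
      (∀ y y', (s n).b y = (s n).b y' → (y ∈ U ↔ y' ∈ U)))
    (hKmono : Monotone K)
    (hK : ∀ n y z, (s n).b z = (s n).b y → z ∈ (s n).K → (y ∈ (s (n + 1)).K ↔ y ∈ (s n).K))
    (hL : ∀ n x z, (s n).b z = (s n).a x → z ∈ (s n).K → (x ∈ (s (n + 1)).L ↔ x ∈ (s n).L))
    (hK' : ∀ n y, (∀ z, (s n).b z = (s n).b y → z ∉ (s n).K) → y ∈ K n → y ∈ (s (n + 1)).K)
    {x y : X} (hxy : ∀ n, (s n).b y = (s n).a x) (hx : x ∈ N) (n : ℕ) : y ∉ K n := by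
  intro hy
  -- The cells of a point eventually lie in any given neighbourhood.
  have small : ∀ (m : ℕ) (O : Set X), IsOpen O → ∀ p ∈ O, ∃ k, m ≤ k ∧
      (∀ z, (s k).b z = (s k).b p → z ∈ O) ∧ (∀ z, (s k).a z = (s k).a p → z ∈ O) := by
    intro m O hO p hp
    obtain ⟨V, hV, hpV, hVO⟩ := compact_exists_isClopen_in_isOpen hO hp
    obtain ⟨k, hk1, hk2⟩ := hU V hV
    have r := refines_of_le hr (le_max_right m k)
    exact ⟨max m k, le_max_left _ _, fun z hz => hVO ((hk2 z p (r.ran _ _ hz)).2 hpV),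
      fun z hz => hVO ((hk1 z p (r.dom _ _ hz)).2 hpV)⟩
  have enter : ∃ m, y ∈ (s m).K := by
    by_contra! hno
    have meet : ∀ m, n ≤ m → ∃ z, (s m).b z = (s m).b y ∧ z ∈ (s m).K := by
      intro m hm
      by_contra! h
      exact hno (m + 1) (hK' m y h (hKmono hm hy))
    have same : ∀ m, n ≤ m → ∀ w, (s m).b w = (s m).b y → (w ∈ (s m).K ↔ w ∈ (s n).K) := by
      intro m hm
      induction m, hm using Nat.le_induction with
      | base => exact fun _ _ => Iff.rfl
      | succ m hm ih =>
        intro w hw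
        obtain ⟨z, hz, hzK⟩ := meet m hm
        have hw' := (hr m).ran _ _ hw
        rw [hK m w z (hz.trans hw'.symm) hzK, ih w hw']
    obtain ⟨k, hk, h, -⟩ := small n (s n).Kᶜ (s n).thin_K.closed.isOpen_compl y (hno n)
    obtain ⟨z, hz, hzK⟩ := meet k hk
    exact h z hz ((same k hk z hz).1 hzK)
  obtain ⟨m, hm⟩ := enter
  have stay : ∀ k, m ≤ k → y ∈ (s k).K ∧
      ∀ w, (s k).a w = (s k).a x → (w ∈ (s k).L ↔ w ∈ (s m).L) := by
    intro k hk
    induction k, hk using Nat.le_induction with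
    | base => exact ⟨hm, fun _ _ => Iff.rfl⟩
    | succ k hk ih =>
      refine ⟨(hK k y y rfl ih.1).2 ih.1, fun w hw => ?_⟩
      have hw' := (hr k).dom _ _ hw
      rw [hL k w y ((hxy k).trans hw'.symm) ih.1, ih.2 w hw']
  have hxL : x ∉ (s m).L := fun h => disjoint_left.1 (s m).disjoint h hx
  obtain ⟨k, hk, -, h⟩ := small m (s m).Lᶜ (s m).thin_L.closed.isOpen_compl x hxL
  obtain ⟨hyK, hsame⟩ := stay k hk
  rcases ((s k).matched ((s k).b y)).2 with h0 | h0
  · exact (h0 ▸ ⟨rfl, hyK⟩ : y ∈ (∅ : Set X))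
  · obtain ⟨w, hw, hwL⟩ := nonempty_of_measureReal_ne_zero
      (measureReal_nonneg.trans_lt h0).ne'
    have hw' : (s k).a w = (s k).a x := hw.trans (hxy k)
    exact h w hw' ((hsame w hw').1 hwL)

end Stage

open TopologicalSpace in
/-- There are measure-preserving homeomorphisms mapping a clopen set `A` onto a clopen set `B` of
the same measure and moving a null set off countably many closed nowhere dense sets. -/
theorem exists_homeomorph (hμ : GoodMeasure μ) {A B N : Set X} (hA : IsClopen A) (hB : IsClopen B)
    (hAB : μ.real A = μ.real B) (hN : μ N = 0) {K : ℕ → Set X} (hK : ∀ n, Thin (K n))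
    (hKmono : Monotone K) :
    ∃ h : X ≃ₜ X, (∀ S : Set X, MeasurableSet S → μ (h '' S) = μ S) ∧ h '' A = B ∧
      ∀ x ∈ N, ∀ n, h x ∉ K n := by
  classical
  -- Enlarge `N` to a dense measurable null set.
  obtain ⟨Q, hQ, hQd⟩ := exists_countable_dense X
  have hQ0 : μ Q = 0 := by
    rw [← biUnion_of_singleton Q]
    exact (measure_biUnion_null_iff hQ).2 fun x _ => hμ.null_singleton x
  set M := toMeasurable μ N ∪ Q with hM
  have hMm : MeasurableSet M := (measurableSet_toMeasurable μ N).union hQ.measurableSet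
  have hM0 : μ M = 0 := measure_union_null ((measure_toMeasurable N).trans hN) hQ0
  have hMd : Dense M := hQd.mono subset_union_right
  have hNM : N ⊆ M := (subset_toMeasurable μ N).trans subset_union_left
  have hcc : Countable (Clopens X) := Clopens.countable_iff_secondCountable.2 inferInstance
  obtain ⟨U, hU⟩ := exists_surjective_nat (Clopens X)
  have hlab : ∀ C : Set X, IsClopen C → Continuous fun x => if x ∈ C then (1 : ℕ) else 0 :=
    fun C hC => continuous_const.if (fun x hx => by
      have : frontier {x | x ∈ C} = ∅ := hC.frontier_eq
      exact absurd hx (this ▸ notMem_empty x)) continuous_const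
  let s₀ : Stage μ M :=
    { a := fun x => if x ∈ A then 1 else 0
      b := fun x => if x ∈ B then 1 else 0
      K := ∅
      L := ∅
      continuous_a := hlab A hA
      continuous_b := hlab B hB
      thin_K := Thin.empty
      thin_L := Thin.empty
      disjoint := empty_disjoint _
      matched := fun i => by
        have e : ∀ C : Set X, (fun x => if x ∈ C then (1 : ℕ) else 0) ⁻¹' {i} =
            if i = 1 then C else if i = 0 then Cᶜ else ∅ := by
          intro C
          ext x
          by_cases hx : x ∈ C <;> simp only [mem_preimage, hx] <;> split_ifs <;>
            simp_all <;> omega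
        refine ⟨?_, .inl (inter_empty _)⟩
        rw [e, e]
        split_ifs
        · exact hAB
        · rw [measureReal_compl hA.isOpen.measurableSet, measureReal_compl hB.isOpen.measurableSet,
            hAB]
        · rfl }
  choose nxt hnxt using fun (n : ℕ) (s : Stage μ M) =>
    s.exists_step hμ hMm hM0 hMd (hK n) (U n).isClopen
  let s : ℕ → Stage μ M := fun n => Nat.rec s₀ nxt n
  have hs : ∀ n, s (n + 1) = nxt n (s n) := fun n => rfl
  have hr : ∀ n, Stage.Refines (s n) (s (n + 1)) := fun n => (hnxt n (s n)).1
  have hdec : ∀ V : Set X, IsClopen V → ∃ n,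
      (∀ x x', (s n).a x = (s n).a x' → (x ∈ V ↔ x' ∈ V)) ∧
      (∀ y y', (s n).b y = (s n).b y' → (y ∈ V ↔ y' ∈ V)) := by
    intro V hV
    obtain ⟨n, hn⟩ := hU ⟨V, hV⟩
    have := (hnxt n (s n)).2.2.2.2
    rw [hn] at this
    exact ⟨n + 1, this⟩
  obtain ⟨h, hh, hpres⟩ := Stage.exists_homeomorph hμ hr hdec
  refine ⟨h, hpres, ?_, fun x hx n => Stage.notMem_of_forall_eq hr hdec hKmono
    (fun n => (hnxt n (s n)).2.1) (fun n => (hnxt n (s n)).2.2.1)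
    (fun n => (hnxt n (s n)).2.2.2.1) (fun n => hh n x) (hNM hx) n⟩
  have h0 : ∀ x, h x ∈ B ↔ x ∈ A := by
    intro x
    have : (if h x ∈ B then (1 : ℕ) else 0) = if x ∈ A then 1 else 0 := hh 0 x
    split_ifs at this <;> simp_all
  ext y
  rw [← h.apply_symm_apply y, h.injective.mem_set_image, h0]

/-! ### Ergodicity and meager sets -/

/-- Clopen sets of small measure have copies more than half of which lies in `D`. -/
lemma exists_half (hμ : GoodMeasure μ) {D : Set X} (hD : MeasurableSet D) (hD0 : 0 < μ.real D) :
    ∃ δ > 0, ∀ P : Set X, IsClopen P → 0 < μ.real P → μ.real P < δ →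
      ∃ A : Set X, IsClopen A ∧ μ.real A = μ.real P ∧ μ.real (A \ D) < μ.real P / 2 := by
  -- Otherwise fill up a clopen approximation `W` to `D` with disjoint copies of `P`, in each of
  -- which at least half of the mass is outside `D`; this is more than `W` can hold.
  refine ⟨μ.real D / 4, by positivity, fun P hP hP0 hPD => ?_⟩
  by_contra! hc
  obtain ⟨W, -, hW, h1, h2⟩ := exists_clopen_approx (μ := μ) isClopen_univ hD
    (show 0 < μ.real D / 8 by positivity)
  rw [univ_inter] at h2
  have hWD : 7 / 8 * μ.real D < μ.real W := by
    have := real_split (μ := μ) D hW.isOpen.measurableSet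
    have := measureReal_mono (μ := μ) (inter_subset_right : D ∩ W ⊆ W)
    linarith
  have hWP : 0 < μ.real W / μ.real P := div_pos (by linarith) hP0
  obtain ⟨n, hn⟩ := Nat.exists_eq_succ_of_ne_zero (Nat.ceil_pos.2 hWP).ne'
  have hn1 := Nat.ceil_lt_add_one hWP.le
  have hn2 := Nat.le_ceil (μ.real W / μ.real P)
  rw [hn] at hn1 hn2
  push_cast at hn1 hn2
  rw [add_lt_add_iff_right, lt_div_iff₀ hP0] at hn1
  rw [div_le_iff₀ hP0] at hn2
  obtain ⟨V, hVW, -, -, hVD⟩ := hμ.exists_copies hP hW hD (c := μ.real P / 2)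
    (fun A hA _ hAP => hc A hA hAP) n hn1
  have := measureReal_mono (μ := μ) (sdiff_subset_sdiff_left hVW : V \ D ⊆ W \ D)
  linarith

/-- The measure-preserving homeomorphisms act ergodically, in a form needing only one homeomorphism
for each pair of clopen sets. -/
lemma exists_forall_inter_nonempty (hμ : GoodMeasure μ) {D Y : Set X} (hD : MeasurableSet D)
    (hD0 : 0 < μ.real D) (hY : MeasurableSet Y) (hY0 : 0 < μ.real Y) :
    ∃ A B : Set X, IsClopen A ∧ IsClopen B ∧ μ.real A = μ.real B ∧
      ∀ h : X ≃ₜ X, (∀ S : Set X, MeasurableSet S → μ (h '' S) = μ S) → h '' A = B →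
        (h '' D ∩ Y).Nonempty := by
  obtain ⟨δ, hδ, h1⟩ := hμ.exists_half hD hD0
  obtain ⟨δ', hδ', h2⟩ := hμ.exists_half hY hY0
  obtain ⟨x, -⟩ := nonempty_of_measureReal_ne_zero hD0.ne'
  obtain ⟨P, -, hP, hxP, hPδ⟩ := hμ.exists_small isOpen_univ (mem_univ x) (lt_min hδ hδ')
  have hP0 := hμ.pos P hP.isOpen ⟨x, hxP⟩
  obtain ⟨A, hA, hAP, hAD⟩ := h1 P hP hP0 (hPδ.trans_le (min_le_left _ _))
  obtain ⟨B, hB, hBP, hBY⟩ := h2 P hP hP0 (hPδ.trans_le (min_le_right _ _))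
  refine ⟨A, B, hA, hB, hAP.trans hBP.symm, fun h hh hAB => ?_⟩
  by_contra hne
  have hsub : B ⊆ h '' (A \ D) ∪ B \ Y := by
    intro y hy
    obtain ⟨a, ha, rfl⟩ := hAB ▸ hy
    by_cases haD : a ∈ D
    · exact .inr ⟨hy, fun hyY => hne ⟨h a, ⟨a, haD, rfl⟩, hyY⟩⟩
    · exact .inl ⟨a, ⟨ha, haD⟩, rfl⟩
  have h3 : μ.real (h '' (A \ D)) = μ.real (A \ D) :=
    congrArg ENNReal.toReal (hh _ (hA.isOpen.measurableSet.diff hD))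
  have h4 := (measureReal_mono (μ := μ) hsub).trans (measureReal_union_le _ _)
  linarith

lemma Thin.union {K L : Set X} (hK : Thin K) (hL : Thin L) : Thin (K ∪ L) := by
  refine ⟨hK.closed.union hL.closed, fun U hU h => ?_⟩
  obtain ⟨x, hx, hxL⟩ := hL.nonempty_diff _ (hU.sdiff hK.closed) (hK.nonempty_diff U hU h)
  exact ⟨x, hx.1, fun h => h.elim hx.2 hxL⟩

/-- A meager set is covered by an increasing sequence of closed nowhere dense sets. -/
lemma exists_monotone_thin {M : Set X} (hM : IsMeagre M) :
    ∃ K : ℕ → Set X, (∀ n, Thin (K n)) ∧ Monotone K ∧ M ⊆ ⋃ n, K n := by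
  obtain ⟨S, hS, hSc, hMS⟩ := isMeagre_iff_countable_union_isNowhereDense.1 hM
  obtain ⟨F, hF⟩ := (hSc.insert ∅).exists_eq_range (insert_nonempty _ _)
  have hFt : ∀ n, Thin (closure (F n)) := by
    intro n
    have hn : IsNowhereDense (F n) := by
      rcases (hF ▸ mem_range_self n : F n ∈ insert ∅ S) with h | h
      · rw [h]; exact isNowhereDense_empty
      · exact hS _ h
    refine ⟨isClosed_closure, fun U hU hne => ?_⟩
    by_contra h
    have := interior_maximal (sdiff_eq_empty.1 (not_nonempty_iff_eq_empty.1 h)) hU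
    rw [hn] at this
    exact hne.ne_empty (subset_empty_iff.1 this)
  refine ⟨accumulate fun n => closure (F n), fun n => ?_, monotone_accumulate, ?_⟩
  · induction n with
    | zero => simpa using hFt 0
    | succ n ih => rw [accumulate_succ]; exact ih.union (hFt _)
  · rw [iUnion_accumulate]
    intro x hx
    obtain ⟨T, hT, hxT⟩ := hMS hx
    obtain ⟨n, rfl⟩ := hF ▸ (mem_insert_of_mem ∅ hT)
    exact mem_iUnion.2 ⟨n, subset_closure hxT⟩

end GoodMeasure

/-! ### Proof of the theorem -/

lemma iUnion_mem_of_nat {X ι : Type*} [Countable ι] {I : Set (Set X)} (h0 : ∅ ∈ I)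
    (hσ : ∀ f : ℕ → Set X, (∀ n, f n ∈ I) → (⋃ n, f n) ∈ I) {f : ι → Set X} (hf : ∀ i, f i ∈ I) :
    (⋃ i, f i) ∈ I := by
  cases isEmpty_or_nonempty ι
  · simpa using h0
  · obtain ⟨g, hg⟩ := exists_surjective_nat ι
    rw [← hg.iUnion_comp]
    exact hσ _ fun n => hf _

/-- An invariant σ-ideal with measurable BP-base containing a non-meager set and a
set of positive measure contains everything. -/
theorem stmt14 {X : Type*} [TopologicalSpace X] [CompactSpace X] [T2Space X]
    [TopologicalSpace.MetrizableSpace X] [TotallyDisconnectedSpace X]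
    [MeasurableSpace X] [BorelSpace X]
    (μ : MeasureTheory.Measure X) [MeasureTheory.IsFiniteMeasure μ]
    (hperf : ∀ x : X, ¬ IsOpen ({x} : Set X))
    (hcont : ∀ x : X, μ {x} = 0)
    (hpos : ∀ U : Set X, IsOpen U → U.Nonempty → 0 < μ U)
    (hsc : ∀ U V : Set X, IsClopen U → IsClopen V → μ U < μ V →
      ∃ W, W ⊆ V ∧ IsClopen W ∧ μ W = μ U)
    (I : Set (Set X))
    (hdown : ∀ A ∈ I, ∀ B : Set X, B ⊆ A → B ∈ I)
    (hcup : ∀ A ∈ I, ∀ B ∈ I, A ∪ B ∈ I)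
    (hinv : ∀ h : X ≃ₜ X, (∀ S : Set X, MeasurableSet S → μ (h '' S) = μ S) →
      ∀ A ∈ I, h '' A ∈ I)
    (hσ : ∀ f : ℕ → Set X, (∀ n, f n ∈ I) → (⋃ n, f n) ∈ I)
    (hbase : ∀ A ∈ I, ∃ B ∈ I, A ⊆ B ∧ MeasurableSet B ∧
      ∃ U : Set X, IsOpen U ∧ IsMeagre (symmDiff B U))
    (hbig1 : ∃ A ∈ I, ¬ IsMeagre A)
    (hbig2 : ∃ A ∈ I, 0 < μ A) :
    Set.univ ∈ I := by
  have hμ : GoodMeasure μ := by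
    refine ⟨hcont, fun U hU hne => ENNReal.toReal_pos (hpos U hU hne).ne' (by finiteness),
      fun U V hU hV h => ?_⟩
    obtain ⟨W, hWV, hW, hWU⟩ := hsc U V hU hV
      ((ENNReal.toReal_lt_toReal (by finiteness) (by finiteness)).1 h)
    exact ⟨W, hWV, hW, congrArg ENNReal.toReal hWU⟩
  have h0 : ∅ ∈ I := hbig1.elim fun A hA => hdown A hA.1 ∅ (empty_subset A)
  have hcc : Countable (TopologicalSpace.Clopens X) :=
    TopologicalSpace.Clopens.countable_iff_secondCountable.2 inferInstance
  -- `I` contains a comeager set `C`.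
  obtain ⟨C, hCI, hC⟩ : ∃ C ∈ I, IsMeagre Cᶜ := by
    obtain ⟨A, hA, hAm⟩ := hbig1
    obtain ⟨B, hB, hAB, -, U, hU, hBU⟩ := hbase A hA
    have hne : U.Nonempty := by
      rw [nonempty_iff_ne_empty]
      rintro rfl
      exact hAm ((by rwa [← bot_eq_empty, symmDiff_bot] at hBU : IsMeagre B).mono hAB)
    obtain ⟨v, hv⟩ := hne
    obtain ⟨V, hV, hvV, hVU⟩ := compact_exists_isClopen_in_isOpen hU hv
    have hloc : ∀ x : X, ∃ Q S : Set X, IsClopen Q ∧ x ∈ Q ∧ S ∈ I ∧ IsMeagre (Q \ S) := by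
      intro x
      obtain ⟨Q, -, hQ, hxQ, hQV⟩ := hμ.exists_small isOpen_univ (mem_univ x)
        (hμ.pos V hV.isOpen ⟨v, hvV⟩)
      obtain ⟨W, hWV, hW, hWQ⟩ := hμ.subset Q V hQ hV hQV
      obtain ⟨h, hh, hhW, -⟩ := hμ.exists_homeomorph hW hQ hWQ (measure_empty (μ := μ))
        (K := fun _ => ∅) (fun _ => GoodMeasure.Thin.empty) monotone_const
      refine ⟨Q, h '' B, hQ, hxQ, hinv h hh B hB, ?_⟩
      have hm : IsMeagre (h '' (U \ B)) := by
        rw [← h.preimage_symm]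
        exact (hBU.mono fun z hz => .inr hz).preimage_of_isOpenMap h.symm.continuous
          h.symm.isOpenMap
      refine hm.mono ?_
      rintro y ⟨hyQ, hyB⟩
      obtain ⟨w, hw, rfl⟩ := hhW ▸ hyQ
      exact ⟨w, ⟨hVU (hWV hw), fun hwB => hyB ⟨w, hwB, rfl⟩⟩, rfl⟩
    choose Q S hQ hxQ hS hQS using hloc
    obtain ⟨t, ht⟩ := CompactSpace.elim_nhds_subcover Q fun x => (hQ x).isOpen.mem_nhds (hxQ x)
    refine ⟨⋃ x : t, S x, iUnion_mem_of_nat h0 hσ fun x => hS x, ?_⟩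
    refine (isMeagre_iUnion fun x : t => hQS x).mono ?_
    intro y hy
    have hyt : y ∈ ⋃ x ∈ t, Q x := ht ▸ mem_univ y
    simp only [mem_iUnion, exists_prop] at hyt
    obtain ⟨x, hxt, hyx⟩ := hyt
    exact mem_iUnion.2 ⟨⟨x, hxt⟩, hyx, fun h => hy (mem_iUnion.2 ⟨⟨x, hxt⟩, h⟩)⟩
  -- `I` contains a set `E` of full measure.
  obtain ⟨E, hEI, hE⟩ : ∃ E ∈ I, μ Eᶜ = 0 := by
    obtain ⟨A, hA, hA0⟩ := hbig2
    obtain ⟨D, hD, hAD, hDm, -⟩ := hbase A hA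
    have hD0 : 0 < μ.real D :=
      ENNReal.toReal_pos (hA0.trans_le (measure_mono hAD)).ne' (by finiteness)
    let ι := {p : TopologicalSpace.Clopens X × TopologicalSpace.Clopens X //
      μ.real (p.1 : Set X) = μ.real (p.2 : Set X)}
    -- Only countably many homeomorphisms may be used, one for each element of `ι`.
    choose h hh hAB _ using fun p : ι =>
      hμ.exists_homeomorph p.1.1.isClopen p.1.2.isClopen p.2 (measure_empty (μ := μ))
        (K := fun _ => ∅) (fun _ => GoodMeasure.Thin.empty) monotone_const
    refine ⟨⋃ p, h p '' D, iUnion_mem_of_nat h0 hσ fun p => hinv _ (hh p) D hD, ?_⟩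
    by_contra hne
    have hm : MeasurableSet (⋃ p, h p '' D)ᶜ :=
      (MeasurableSet.iUnion fun p => (h p).measurableEmbedding.measurableSet_image.2 hDm).compl
    obtain ⟨A, B, hAc, hBc, hABm, hmeet⟩ := hμ.exists_forall_inter_nonempty hDm hD0 hm
      (ENNReal.toReal_pos hne (by finiteness))
    obtain ⟨y, hyD, hy⟩ := hmeet (h ⟨(⟨A, hAc⟩, ⟨B, hBc⟩), hABm⟩) (hh _) (hAB _)
    exact hy (mem_iUnion.2 ⟨_, hyD⟩)
  -- A measure-preserving homeomorphism moves the null set `Eᶜ` into `C`.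
  obtain ⟨K, hK, hKm, hCK⟩ := GoodMeasure.exists_monotone_thin hC
  obtain ⟨h, hh, -, hhE⟩ := hμ.exists_homeomorph isClopen_univ isClopen_univ rfl hE hK hKm
  have hsymm : ∀ S : Set X, MeasurableSet S → μ (h.symm '' S) = μ S := by
    intro S hS
    rw [← hh _ (h.symm.measurableEmbedding.measurableSet_image.2 hS), ← image_comp,
      h.self_comp_symm, image_id]
  refine hdown _ (hcup _ hEI _ (hinv h.symm hsymm C hCI)) _ fun x _ => ?_
  by_cases hxE : x ∈ E
  · exact .inl hxE
  · refine .inr ⟨h x, ?_, h.symm_apply_apply x⟩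
    by_contra hxC
    obtain ⟨n, hn⟩ := mem_iUnion.1 (hCK hxC)
    exact hhE x hxE n hn
end
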